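/- arXiv:2410.01549 — 3 statements merged into one kernel-verified Lean document; each statement's English description precedes it below -/
import Mathlib

section
/- For every integer k ≥ 3 and every even integer n ≥ 12, every Gallai k-coloring of the complete graph on 5n/2 + k − 6 vertices contains a monochromatic copy of K^+_{1,n}. Consequently GR_k(K^+_{1,n}) = 5n/2 + k − 6. -/
open SimpleGraph

/-- A monochromatic copy of `H` in the graph `G` edge-colored by `c`:
an injective map sending edges of `H` to edges of `G`, all image edges of one color. -/
def IsMonoCopy {α V : Type*} {k : ℕ} (G : SimpleGraph V) (c : V → V → Fin k)
    (H : SimpleGraph α) : Prop :=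
  ∃ (f : α → V) (i : Fin k), Function.Injective f ∧
    ∀ a b, H.Adj a b → G.Adj (f a) (f b) ∧ c (f a) (f b) = i

/-- The edge coloring `c` of `G` has no rainbow triangle. -/
def NoRainbowTriangle {V : Type*} {k : ℕ} (G : SimpleGraph V) (c : V → V → Fin k) : Prop :=
  ¬ ∃ x y z : V, G.Adj x y ∧ G.Adj y z ∧ G.Adj x z ∧
    c x y ≠ c y z ∧ c y z ≠ c x z ∧ c x y ≠ c x z

/-- The Gallai–Ramsey number `GR_k(H)`: the least `N` such that every
rainbow-triangle-free `k`-edge-coloring of the complete graph on `N` vertices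
contains a monochromatic copy of `H`. -/
noncomputable def GallaiRamsey (k : ℕ) {α : Type*} (H : SimpleGraph α) : ℕ :=
  sInf {N | ∀ c : Fin N → Fin N → Fin k, (∀ x y, c x y = c y x) →
    NoRainbowTriangle (⊤ : SimpleGraph (Fin N)) c →
    IsMonoCopy (⊤ : SimpleGraph (Fin N)) c H}

/-- The diagonal two-color Ramsey number `R(H, H)`. -/
noncomputable def Ramsey2 {α : Type*} (H : SimpleGraph α) : ℕ :=
  sInf {N | ∀ c : Fin N → Fin N → Fin 2, (∀ x y, c x y = c y x) →
    IsMonoCopy (⊤ : SimpleGraph (Fin N)) c H}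

/-- The fan `F_3 = K_1 + 3K_2`: vertex `0` is the center, joined to all other
vertices, together with the three disjoint edges `12`, `34`, `56`. -/
def fanF3 : SimpleGraph (Fin 7) :=
  SimpleGraph.fromRel (fun a b => a = 0 ∨ (a.val % 2 = 1 ∧ b.val = a.val + 1))

/-- The kipas `K̂_m = K_1 + P_m`: vertex `0` is the center, joined to all other
vertices, and `1, 2, …, m` form a path. -/
def kipasG (m : ℕ) : SimpleGraph (Fin (m + 1)) :=
  SimpleGraph.fromRel (fun a b => a = 0 ∨ (1 ≤ a.val ∧ b.val = a.val + 1))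

/-- The wheel `W_m = K_1 + C_m`: vertex `0` is the center, joined to all other
vertices, and `1, 2, …, m` form a cycle. -/
def wheelG (m : ℕ) : SimpleGraph (Fin (m + 1)) :=
  SimpleGraph.fromRel (fun a b =>
    a = 0 ∨ (1 ≤ a.val ∧ b.val = a.val + 1) ∨ (a.val = m ∧ b.val = 1))

/-- The star `K_{1,n}`: vertex `0` is the center, joined to all other vertices. -/
def starG (n : ℕ) : SimpleGraph (Fin (n + 1)) :=
  SimpleGraph.fromRel (fun a _ => a = 0)

/-- `K⁺_{1,n}`, the star `K_{1,n}` with one edge subdivided: vertex `0` is joined to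
`1, …, n`, and the extra vertex `n+1` is joined to `n`. -/
def starPlusG (n : ℕ) : SimpleGraph (Fin (n + 2)) :=
  SimpleGraph.fromRel (fun a b => (a = 0 ∧ b.val ≤ n) ∨ (a.val = n ∧ b.val = n + 1))

/-- The complete graph on `Fin N` with the single edge `{0, 1}` deleted. -/
def compMinusEdge (N : ℕ) : SimpleGraph (Fin N) where
  Adj x y := x ≠ y ∧ ¬(x.val = 0 ∧ y.val = 1) ∧ ¬(x.val = 1 ∧ y.val = 0)
  symm := by
    refine ⟨?_⟩
    intro x y h
    exact ⟨h.1.symm, fun hc => h.2.2 ⟨hc.2, hc.1⟩, fun hc => h.2.1 ⟨hc.2, hc.1⟩⟩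
  loopless := by refine ⟨?_⟩; intro x h; exact h.1 rfl

/-- The complete graph on `Fin M` together with one extra vertex (`none`)
joined exactly to the vertices of `A`. -/
def addVertex (M : ℕ) (A : Set (Fin M)) : SimpleGraph (Option (Fin M)) where
  Adj x y := (∃ a b : Fin M, x = some a ∧ y = some b ∧ a ≠ b) ∨
    (∃ a ∈ A, (x = some a ∧ y = none) ∨ (x = none ∧ y = some a))
  symm := by
    refine ⟨?_⟩
    rintro x y (⟨a, b, hx, hy, hab⟩ | ⟨a, ha, (⟨hx, hy⟩ | ⟨hx, hy⟩)⟩)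
    · exact Or.inl ⟨b, a, hy, hx, hab.symm⟩
    · exact Or.inr ⟨a, ha, Or.inr ⟨hy, hx⟩⟩
    · exact Or.inr ⟨a, ha, Or.inl ⟨hy, hx⟩⟩
  loopless := by
    refine ⟨?_⟩
    rintro x (⟨a, b, hx, hy, hab⟩ | ⟨a, ha, (⟨hx, hy⟩ | ⟨hx, hy⟩)⟩) <;> simp_all

/-- The star-critical Gallai–Ramsey number `GR*_k(H)`: the least `s` such that
every rainbow-triangle-free `k`-edge-coloring of the complete graph on
`GR_k(H) - 1` vertices plus one extra vertex joined to exactly `s` of them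
contains a monochromatic copy of `H`. -/
noncomputable def GRstar (k : ℕ) {α : Type*} (H : SimpleGraph α) : ℕ :=
  sInf {s | ∀ A : Finset (Fin (GallaiRamsey k H - 1)), A.card = s →
    ∀ c : Option (Fin (GallaiRamsey k H - 1)) → Option (Fin (GallaiRamsey k H - 1)) → Fin k,
      (∀ x y, c x y = c y x) →
      NoRainbowTriangle (addVertex (GallaiRamsey k H - 1) (↑A)) c →
      IsMonoCopy (addVertex (GallaiRamsey k H - 1) (↑A)) c H}

/-- `H` is Gallai-Ramsey-full for `k` colors: the complete graph on `GR_k(H)`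
vertices minus one edge admits a rainbow-triangle-free `k`-edge-coloring with
no monochromatic copy of `H`. -/
def GallaiRamseyFull (k : ℕ) {α : Type*} (H : SimpleGraph α) : Prop :=
  ∃ c : Fin (GallaiRamsey k H) → Fin (GallaiRamsey k H) → Fin k,
    (∀ x y, c x y = c y x) ∧
    NoRainbowTriangle (compMinusEdge (GallaiRamsey k H)) c ∧
    ¬ IsMonoCopy (compMinusEdge (GallaiRamsey k H)) c H

/-- Reachability inside the vertex set `s`: there is a walk all of whose
vertices lie in `s`. -/
def ReachableWithin {V : Type*} (R : SimpleGraph V) (s : Set V) (u v : V) : Prop :=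
  ∃ w : R.Walk u v, ∀ x ∈ w.support, x ∈ s



namespace StarPlus

section gallai

variable {V C : Type*}

/-- Rainbow-triangle-freeness in disjunctive form. -/
def Gal (c : V → V → C) : Prop :=
  ∀ x y z, x ≠ y → y ≠ z → x ≠ z → c x y = c y z ∨ c y z = c x z ∨ c x y = c x z

/-- Reachability within `X` using color `i`. -/
def Rel (c : V → V → C) (X : Finset V) (i : C) : V → V → Prop :=
  Relation.ReflTransGen (fun u v => u ∈ X ∧ v ∈ X ∧ c u v = i)

/-- Color `i` is disconnected on `X`. -/
def Cut (c : V → V → C) (X : Finset V) (i : C) : Prop :=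
  ∃ A : Set V, (∃ x ∈ X, x ∈ A) ∧ (∃ x ∈ X, x ∉ A) ∧
    ∀ x ∈ X, ∀ y ∈ X, x ∈ A → y ∉ A → c x y ≠ i

variable {c : V → V → C} {X : Finset V} {i : C}

lemma Rel.symm' (hs : ∀ x y, c x y = c y x) {x y : V} (h : Rel c X i x y) : Rel c X i y x := by
  induction h with
  | refl => exact Relation.ReflTransGen.refl
  | tail _ h2 ih =>
    exact Relation.ReflTransGen.head ⟨h2.2.1, h2.1, (hs _ _).trans h2.2.2⟩ ih

lemma Rel.mem {x y : V} (hx : x ∈ X) (h : Rel c X i x y) : y ∈ X := by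
  induction h with
  | refl => exact hx
  | tail _ h2 _ => exact h2.2.1

lemma Rel.mono_color (hs : ∀ x y, c x y = c y x) (hG : Gal c) {u u' w : V} (hw : w ∈ X)
    (hn : ¬ Rel c X i u w) (h : Rel c X i u u') : c u w = c u' w := by
  induction h with
  | refl => rfl
  | @tail y z h1 h2 ih =>
    rw [ih]
    have hz : Rel c X i u z := Relation.ReflTransGen.tail h1 h2
    have hyw : y ≠ w := fun h => hn (h ▸ h1)
    have hzw : z ≠ w := fun h => hn (h ▸ hz)
    have h3 : c y w ≠ i := fun h => hn (Relation.ReflTransGen.tail h1 ⟨h2.1, hw, h⟩)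
    have h4 : c z w ≠ i := fun h => hn (Relation.ReflTransGen.tail hz ⟨h2.2.1, hw, h⟩)
    by_cases hyz : y = z
    · rw [hyz]
    have := hG y z w hyz hzw hyw
    have := h2.2.2
    grind

lemma Cut.not_rel {A : Set V} (hA : ∀ x ∈ X, ∀ y ∈ X, x ∈ A → y ∉ A → c x y ≠ i)
    {x y : V} (hx : x ∈ A) (h : Rel c X i x y) : y ∈ A := by
  induction h with
  | refl => exact hx
  | tail _ h2 ih =>
    by_contra hc
    exact hA _ h2.1 _ h2.2.1 ih hc h2.2.2

lemma cut_step [DecidableEq V] (hs : ∀ x y, c x y = c y x) (hG : Gal c) {v : V} (hv : v ∈ X)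
    {a b d : C} (hab : a ≠ b) (had : a ≠ d) (hbd : b ≠ d) (hcut : Cut c (X.erase v) a)
    (ha : ¬ Cut c X a) (hb : ¬ Cut c X b) (hd : ¬ Cut c X d) : False := by
  obtain ⟨A, ⟨x0, hx0, hx0A⟩, ⟨y0, hy0, hy0A⟩, hA⟩ := hcut
  -- every component sees `v` in color `a`
  have claim : ∀ u ∈ X.erase v, ∃ w ∈ X.erase v, Rel c (X.erase v) a u w ∧ c v w = a := by
    intro u hu
    by_contra hcon
    push Not at hcon
    refine ha ⟨{y | y ∈ X.erase v ∧ Rel c (X.erase v) a u y},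
      ⟨u, Finset.mem_of_mem_erase hu, hu, Relation.ReflTransGen.refl⟩, ⟨v, hv, ?_⟩, ?_⟩
    · simp
    · rintro x hx y hy ⟨hx', hux⟩ hyn hxy
      by_cases hyv : y = v
      · subst hyv
        exact hcon x hx' hux ((hs _ _).trans hxy)
      · have hy' : y ∈ X.erase v := Finset.mem_erase.2 ⟨hyv, hy⟩
        exact hyn ⟨hy', Relation.ReflTransGen.tail hux ⟨hx', hy', hxy⟩⟩
  have edge : ∀ j, ¬ Cut c X j → ∃ u ∈ X.erase v, c v u = j := by
    intro j hj
    by_contra hcon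
    push Not at hcon
    refine hj ⟨{v}, ⟨v, hv, rfl⟩, ⟨x0, Finset.mem_of_mem_erase hx0, ?_⟩, ?_⟩
    · exact Finset.ne_of_mem_erase hx0
    · rintro x hx y hy hxv hyv
      rw [Set.mem_singleton_iff] at hxv hyv
      subst hxv
      exact hcon y (Finset.mem_erase.2 ⟨hyv, hy⟩)
  obtain ⟨u, hu, hub⟩ := edge b hb
  obtain ⟨u', hu', hud⟩ := edge d hd
  have key : ∀ j, a ≠ j → ∀ u ∈ X.erase v, c v u = j → ∀ w ∈ X.erase v,
      ¬ Rel c (X.erase v) a u w → c v w = a → c u w = j := by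
    intro j haj u hu huj w hw hn hwa
    have h1 : u ≠ w := fun h => hn (h ▸ Relation.ReflTransGen.refl)
    have h2 : c u w ≠ a := fun h => hn (Relation.ReflTransGen.single ⟨hu, hw, h⟩)
    have h3 := hG v u w (Finset.ne_of_mem_erase hu).symm h1 (Finset.ne_of_mem_erase hw).symm
    grind
  by_cases hr : Rel c (X.erase v) a u u'
  · obtain ⟨t, ht, hut⟩ : ∃ t ∈ X.erase v, ¬ Rel c (X.erase v) a u t := by
      by_contra hcon
      push Not at hcon
      exact hy0A (Cut.not_rel hA hx0A (((hcon x0 hx0).symm' hs).trans (hcon y0 hy0)))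
    obtain ⟨w, hw, htw, hwa⟩ := claim t ht
    have h1 : ¬ Rel c (X.erase v) a u w := fun h => hut (h.trans (htw.symm' hs))
    have h2 : ¬ Rel c (X.erase v) a u' w := fun h => h1 (hr.trans h)
    have e1 := key b hab u hu hub w hw h1 hwa
    have e2 := key d had u' hu' hud w hw h2 hwa
    have e3 := Rel.mono_color hs hG hw h1 hr
    exact hbd (e1.symm.trans (e3.trans e2))
  · have hr' : ¬ Rel c (X.erase v) a u' u := fun h => hr (h.symm' hs)
    obtain ⟨w', hw', huw', hwa'⟩ := claim u' hu'
    obtain ⟨w, hw, huw, hwa⟩ := claim u hu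
    have e1 := key b hab u hu hub w' hw' (fun h => hr (h.trans (huw'.symm' hs))) hwa'
    have e2 := key d had u' hu' hud w hw (fun h => hr' (h.trans (huw.symm' hs))) hwa
    have e3 := Rel.mono_color hs hG hu hr' huw'
    have e4 := Rel.mono_color hs hG hu' hr huw
    have := hs u u'
    have := hs u w'
    have := hs u' w
    grind

lemma exists_cut [DecidableEq V] (hs : ∀ x y, c x y = c y x) (hG : Gal c)
    {a b d : C} (hab : a ≠ b) (had : a ≠ d) (hbd : b ≠ d) :
    ∀ (m : ℕ) (X : Finset V), X.card = m → 2 ≤ m →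
      Cut c X a ∨ Cut c X b ∨ Cut c X d := by
  intro m
  induction m with
  | zero => intro X _ h; omega
  | succ m ih =>
    intro X hX hm
    by_contra hcon
    push Not at hcon
    obtain ⟨ha, hb, hd⟩ := hcon
    obtain ⟨v, hv⟩ : X.Nonempty := Finset.card_pos.1 (by omega)
    have hc : (X.erase v).card = m := by rw [Finset.card_erase_of_mem hv]; omega
    by_cases h2 : 2 ≤ m
    · rcases ih _ hc h2 with h | h | h
      · exact cut_step hs hG hv hab had hbd h ha hb hd
      · exact cut_step hs hG hv hab.symm hbd had h hb ha hd
      · exact cut_step hs hG hv had.symm hbd.symm hab h hd ha hb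
    · obtain ⟨t, ht⟩ := Finset.card_eq_one.1 (show (X.erase v).card = 1 by omega)
      have htX : t ∈ X.erase v := by rw [ht]; simp
      have edge : ∀ j, ¬ Cut c X j → c v t = j := by
        intro j hj
        by_contra hne
        refine hj ⟨{v}, ⟨v, hv, rfl⟩, ⟨t, Finset.mem_of_mem_erase htX,
          Finset.ne_of_mem_erase htX⟩, ?_⟩
        intro x hx y hy hxv hyv
        rw [Set.mem_singleton_iff] at hxv hyv
        have : y ∈ X.erase v := Finset.mem_erase.2 ⟨hyv, hy⟩
        rw [ht, Finset.mem_singleton] at this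
        rw [hxv, this]; exact hne
      exact hab ((edge a ha).symm.trans (edge b hb))

/-- Gallai's partition theorem, in terms of a representative map `p`. -/
lemma gallai_partition [DecidableEq V] (hs : ∀ x y, c x y = c y x) (hG : Gal c) :
    ∀ (m : ℕ) (X : Finset V), X.card = m → 2 ≤ m → ∃ (p : V → V) (r b : C),
      (∀ x ∈ X, p x ∈ X ∧ p (p x) = p x) ∧ (∃ x ∈ X, ∃ y ∈ X, p x ≠ p y) ∧
      (∀ x ∈ X, ∀ y ∈ X, p x ≠ p y → c x y = c (p x) (p y)) ∧
      (∀ x ∈ X, ∀ y ∈ X, p x ≠ p y → c x y = r ∨ c x y = b) := by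
  intro m
  induction m using Nat.strong_induction_on with
  | _ m ih =>
  intro X hX hm
  by_cases h3 : ∃ a b d, a ≠ b ∧ a ≠ d ∧ b ≠ d ∧
      (∃ x ∈ X, ∃ y ∈ X, x ≠ y ∧ c x y = a) ∧ (∃ x ∈ X, ∃ y ∈ X, x ≠ y ∧ c x y = b) ∧
      (∃ x ∈ X, ∃ y ∈ X, x ≠ y ∧ c x y = d)
  · obtain ⟨i, hcut, x1, hx1, y1, hy1, hxy1, hi⟩ :
        ∃ i, Cut c X i ∧ ∃ x ∈ X, ∃ y ∈ X, x ≠ y ∧ c x y = i := by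
      obtain ⟨a, b, d, hab, had, hbd, h1, h2, h3⟩ := h3
      rcases exists_cut hs hG hab had hbd m X hX hm with h | h | h
      · exact ⟨a, h, h1⟩
      · exact ⟨b, h, h2⟩
      · exact ⟨d, h, h3⟩
    let S : Setoid V := ⟨Rel c X i, fun _ => Relation.ReflTransGen.refl,
      fun h => h.symm' hs, fun h h' => h.trans h'⟩
    let rep : V → V := fun x => (Quotient.mk S x).out
    have hrep : ∀ x, Rel c X i x (rep x) := fun x =>
      Rel.symm' hs (Quotient.exact (Quotient.out_eq (Quotient.mk S x)))
    have hrepeq : ∀ x y, Rel c X i x y → rep x = rep y := fun x y h => by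
      have : Quotient.mk S x = Quotient.mk S y := Quotient.sound h
      simp only [rep, this]
    have hrepX : ∀ x ∈ X, rep x ∈ X := fun x hx => (hrep x).mem hx
    have hsub : ∀ x ∈ X.image rep, x ∈ X ∧ rep x = x := by
      intro x hx
      obtain ⟨y, hy, rfl⟩ := Finset.mem_image.1 hx
      exact ⟨hrepX y hy, (hrepeq _ _ (hrep y)).symm⟩
    have hlt : (X.image rep).card < m := by
      rw [← hX]
      refine lt_of_le_of_ne Finset.card_image_le fun h => ?_
      have := Finset.card_image_iff.1 h hx1 hy1
        (hrepeq _ _ (Relation.ReflTransGen.single ⟨hx1, hy1, hi⟩))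
      exact hxy1 this
    have h2 : 2 ≤ (X.image rep).card := by
      obtain ⟨A, ⟨x, hx, hxA⟩, ⟨y, hy, hyA⟩, hA⟩ := hcut
      refine Finset.one_lt_card.2 ⟨rep x, Finset.mem_image_of_mem _ hx, rep y,
        Finset.mem_image_of_mem _ hy, fun h => ?_⟩
      have h' : Rel c X i x (rep y) := h ▸ hrep x
      exact hyA (Cut.not_rel hA hxA (h'.trans ((hrep y).symm' hs)))
    obtain ⟨q, r, b, hq1, ⟨x, hx, y, hy, hxy⟩, hq3, hq4⟩ := ih _ hlt (X.image rep) rfl h2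
    have hcol : ∀ x ∈ X, ∀ y ∈ X, rep x ≠ rep y → c x y = c (rep x) (rep y) := by
      intro x hx y hy hne
      have h1 : ¬ Rel c X i x y := fun h => hne (hrepeq _ _ h)
      have h2 : ¬ Rel c X i y (rep x) := fun h => h1 ((hrep x).trans (h.symm' hs))
      rw [Rel.mono_color hs hG hy h1 (hrep x), hs,
        Rel.mono_color hs hG (hrepX x hx) h2 (hrep y), hs]
    have hm' : ∀ x ∈ X, rep x ∈ X.image rep := fun x hx => Finset.mem_image_of_mem _ hx
    refine ⟨fun x => q (rep x), r, b, ?_, ⟨x, (hsub x hx).1, y, (hsub y hy).1, ?_⟩, ?_, ?_⟩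
    · intro x hx
      have h1 := hq1 _ (hm' x hx)
      refine ⟨(hsub _ h1.1).1, ?_⟩
      show q (rep (q (rep x))) = q (rep x)
      rw [(hsub _ h1.1).2, h1.2]
    · show q (rep x) ≠ q (rep y)
      rw [(hsub x hx).2, (hsub y hy).2]; exact hxy
    · intro x hx y hy hne
      have hne' : rep x ≠ rep y := fun h => hne (congrArg q h)
      rw [hcol x hx y hy hne']
      exact hq3 _ (hm' x hx) _ (hm' y hy) hne
    · intro x hx y hy hne
      have hne' : rep x ≠ rep y := fun h => hne (congrArg q h)
      rw [hcol x hx y hy hne']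
      exact hq4 _ (hm' x hx) _ (hm' y hy) hne
  · obtain ⟨x0, hx0, y0, hy0, hne⟩ := Finset.one_lt_card.1 (show 1 < X.card by omega)
    by_cases hall : ∀ x ∈ X, ∀ y ∈ X, x ≠ y → c x y = c x0 y0
    · exact ⟨id, c x0 y0, c x0 y0, fun x hx => ⟨hx, rfl⟩, ⟨x0, hx0, y0, hy0, hne⟩,
        fun _ _ _ _ _ => rfl, fun x hx y hy h => Or.inl (hall x hx y hy h)⟩
    · push Not at hall
      obtain ⟨x1, hx1, y1, hy1, hne1, hc1⟩ := hall
      refine ⟨id, c x0 y0, c x1 y1, fun x hx => ⟨hx, rfl⟩, ⟨x0, hx0, y0, hy0, hne⟩,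
        fun _ _ _ _ _ => rfl, fun x hx y hy h => ?_⟩
      by_contra hcon
      push Not at hcon
      exact h3 ⟨c x0 y0, c x1 y1, c x y, hc1.symm, hcon.1.symm, hcon.2.symm,
        ⟨x0, hx0, y0, hy0, hne, rfl⟩, ⟨x1, hx1, y1, hy1, hne1, rfl⟩, ⟨x, hx, y, hy, h, rfl⟩⟩

end gallai

section weights

variable {V : Type*} [DecidableEq V]

lemma bool5 : ∀ e1 e2 e3 e4 e5 : Bool, e1 = e2 → ¬ e2 = e3 → ¬ e1 = e4 → ¬ e2 = e5 →
    (e4 = e5 → ¬ e5 = e3) → False := by decide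

lemma bool7 : ∀ e1 e2 e3 e4 e5 e6 e7 : Bool, (e1 = e2 → ¬ e2 = e3) → (e1 = e2 → ¬ e2 = e4) →
    (e1 = e3 → ¬ e3 = e4) → (e1 = e5 → ¬ e5 = e6) → (e1 = e5 → ¬ e5 = e7) →
    (e1 = e6 → ¬ e6 = e7) → ¬ e2 = e5 → ¬ e3 = e6 → ¬ e4 = e7 → False := by decide

/-- The weighted two-colored reduced graph cannot be too heavy. -/
lemma reduced_bound (R : Finset V) (w : V → ℕ) (e : V → V → Bool) (s : ℕ) (hs : 2 ≤ s)
    (he : ∀ x y, e x y = e y x)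
    (H : ∀ r ∈ R, ∀ S : Finset V, S ⊆ R.erase r → ∀ t, (∀ x ∈ S, e r x = t) →
      ∑ x ∈ S, w x ≤ 2 * s + 1)
    (hR : 2 ≤ R.card) (hw : ∑ x ∈ R, w x = 5 * s + 2) : False := by
  have hsum : ∀ r ∈ R, w r + (∑ x ∈ (R.erase r) with e r x = true, w x) +
      ∑ x ∈ (R.erase r) with ¬ e r x = true, w x = 5 * s + 2 := by
    intro r hr
    rw [add_assoc, Finset.sum_filter_add_sum_filter_not, Finset.add_sum_erase _ _ hr, hw]
  have ht : ∀ r ∈ R, ∑ x ∈ (R.erase r) with e r x = true, w x ≤ 2 * s + 1 := fun r hr =>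
    H r hr _ (Finset.filter_subset _ _) true (fun x hx => (Finset.mem_filter.1 hx).2)
  have hf : ∀ r ∈ R, ∑ x ∈ (R.erase r) with ¬ e r x = true, w x ≤ 2 * s + 1 := fun r hr =>
    H r hr _ (Finset.filter_subset _ _) false (fun x hx => by
      simpa using (Finset.mem_filter.1 hx).2)
  have hws : ∀ r ∈ R, s ≤ w r := fun r hr => by
    have := hsum r hr; have := ht r hr; have := hf r hr; omega
  have hcard : ∀ r ∈ R, ∀ S : Finset V, S ⊆ R.erase r → ∀ t, (∀ x ∈ S, e r x = t) →
      S.card ≤ 2 := by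
    intro r hr S hS t hSt
    by_contra hc
    have h1 := H r hr S hS t hSt
    have h2 := Finset.card_nsmul_le_sum S w s
      (fun x hx => hws x (Finset.mem_of_mem_erase (hS hx)))
    have h3 : 3 * s ≤ S.card * s := Nat.mul_le_mul_right _ (by omega)
    rw [smul_eq_mul] at h2
    have h4 : 3 * s ≤ 2 * s + 1 := h3.trans (h2.trans h1)
    omega
  have H1 : ∀ r ∈ R, ∀ x ∈ R, r ≠ x → w x ≤ 2 * s + 1 := by
    intro r hr x hx hrx
    have := H r hr {x} (by simp [hx, hrx.symm]) (e r x) (by simp)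
    simpa using this
  have H2 : ∀ r ∈ R, ∀ x ∈ R, ∀ y ∈ R, r ≠ x → r ≠ y → x ≠ y → e r x = e r y →
      w x + w y ≤ 2 * s + 1 := by
    intro r hr x hx y hy hrx hry hxy hh
    have := H r hr {x, y} (by intro z; simp; grind) (e r x) (by simp [hh])
    rwa [Finset.sum_pair hxy] at this
  have H3 : ∀ r ∈ R, ∀ x ∈ R, ∀ y ∈ R, ∀ z ∈ R, r ≠ x → r ≠ y → r ≠ z →
      x ≠ y → x ≠ z → y ≠ z → e r x = e r y → e r y = e r z → False := by
    intro r hr x hx y hy z hz hrx hry hrz hxy hxz hyz h1 h2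
    have := hcard r hr {x, y, z} (by intro u; simp; grind) (e r x) (by simp [h1, h2])
    rw [Finset.card_eq_three.2 ⟨x, y, z, hxy, hxz, hyz, rfl⟩] at this
    omega
  have h5 : R.card ≤ 5 := by
    obtain ⟨r, hr⟩ : R.Nonempty := Finset.card_pos.1 (by omega)
    have h1 := hcard r hr ((R.erase r).filter (fun x => e r x = true))
      (Finset.filter_subset _ _) true (fun x hx => (Finset.mem_filter.1 hx).2)
    have h2 := hcard r hr ((R.erase r).filter (fun x => ¬ e r x = true))
      (Finset.filter_subset _ _) false (fun x hx => by simpa using (Finset.mem_filter.1 hx).2)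
    have h3 := Finset.card_filter_add_card_filter_not (s := R.erase r) (fun x => e r x = true)
    rw [Finset.card_erase_of_mem hr] at h3
    omega
  obtain h | h | h | h : R.card = 2 ∨ R.card = 3 ∨ R.card = 4 ∨ R.card = 5 := by omega
  · obtain ⟨a, b, hab, rfl⟩ := Finset.card_eq_two.1 h
    rw [Finset.sum_pair hab] at hw
    have := H1 a (by simp) b (by simp) hab
    have := H1 b (by simp) a (by simp) hab.symm
    omega
  · obtain ⟨a, b, d, hab, had, hbd, rfl⟩ := Finset.card_eq_three.1 h
    rw [Finset.sum_insert (by simp [hab, had]), Finset.sum_pair hbd] at hw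
    have h1 := H1 a (by simp) b (by simp) hab
    have h2 := H1 b (by simp) a (by simp) hab.symm
    have h3 := H1 a (by simp) d (by simp) had
    have k1 := H2 a (by simp) b (by simp) d (by simp) hab had hbd
    have k2 := H2 b (by simp) a (by simp) d (by simp) hab.symm hbd had
    have k3 := H2 d (by simp) a (by simp) b (by simp) had.symm hbd.symm hab
    rw [he b a] at k2
    rw [he d a, he d b] at k3
    have h4 : ∀ x y z : Bool, x = y ∨ x = z ∨ y = z := by decide
    rcases h4 (e a b) (e a d) (e b d) with h4 | h4 | h4
    · have := k1 h4; omega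
    · have := k2 h4; omega
    · have := k3 h4; omega
  · obtain ⟨a, R', ha, rfl, hR'⟩ := Finset.card_eq_succ.1 h
    obtain ⟨b, d, f, hbd, hbf, hdf, rfl⟩ := Finset.card_eq_three.1 hR'
    simp only [Finset.mem_insert, Finset.mem_singleton, not_or] at ha
    obtain ⟨hab, had, haf⟩ := ha
    rw [Finset.sum_insert (by simp [hab, had, haf]), Finset.sum_insert (by simp [hbd, hbf]),
      Finset.sum_pair hdf] at hw
    generalize hQ : ({a, b, d, f} : Finset V) = Q at *
    have ma : a ∈ Q := by rw [← hQ]; simp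
    have mb : b ∈ Q := by rw [← hQ]; simp
    have md : d ∈ Q := by rw [← hQ]; simp
    have mf : f ∈ Q := by rw [← hQ]; simp
    have quad : ∀ r ∈ Q, ∀ z ∈ Q, ∀ x ∈ Q, ∀ y ∈ Q, r ≠ z → r ≠ x → r ≠ y → z ≠ x → z ≠ y →
        x ≠ y → w r + w z + w x + w y = 5 * s + 2 → ¬ e r x = e r y := by
      intro r hr z hz x hx y hy hrz hrx hry hzx hzy hxy hsm h1
      have k1 := H2 r hr x hx y hy hrx hry hxy h1
      have k2 := H2 x hx r hr z hz hrx.symm hzx.symm hrz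
      have k3 := H2 y hy r hr z hz hry.symm hzy.symm hrz
      have m1 := H3 r hr x hx y hy z hz hrx hry hrz hxy hzx.symm hzy.symm h1
      have m2 := H3 z hz x hx y hy r hr hzx hzy hrz.symm hxy hrx.symm hry.symm
      rw [he x r, he x z] at k2
      rw [he y r, he y z] at k3
      rw [he z r] at m2
      have k2' : ¬ e r x = e z x := fun h => by have := k2 h; omega
      have k3' : ¬ e r y = e z y := fun h => by have := k3 h; omega
      clear k1 k2 k3 hsm H H1 H2 H3 hcard hws ht hf hsum
      generalize e r x = e1 at *
      generalize e r y = e2 at *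
      generalize e r z = e3 at *
      generalize e z x = e4 at *
      generalize e z y = e5 at *
      exact bool5 _ _ _ _ _ h1 m1 k2' k3' m2
    have q1 := quad a ma f mf b mb d md haf hab had hbf.symm hdf.symm hbd (by omega)
    have q2 := quad a ma d md b mb f mf had hab haf hbd.symm hdf hbf (by omega)
    have q3 := quad a ma b mb d md f mf hab had haf hbd hbf hdf (by omega)
    generalize e a b = e1 at *
    generalize e a d = e2 at *
    generalize e a f = e3 at *
    cases e1 <;> cases e2 <;> cases e3 <;> simp at q1 q2 q3
  · obtain ⟨a, R', ha, rfl, hR'⟩ := Finset.card_eq_succ.1 h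
    obtain ⟨b, R'', hb, rfl, hR''⟩ := Finset.card_eq_succ.1 hR'
    obtain ⟨d, f, g, hdf, hdg, hfg, rfl⟩ := Finset.card_eq_three.1 hR''
    simp only [Finset.mem_insert, Finset.mem_singleton, not_or] at ha hb
    obtain ⟨hab, had, haf, hag⟩ := ha
    obtain ⟨hbd, hbf, hbg⟩ := hb
    rw [Finset.sum_insert (by simp [hab, had, haf, hag]),
      Finset.sum_insert (by simp [hbd, hbf, hbg]), Finset.sum_insert (by simp [hdf, hdg]),
      Finset.sum_pair hfg] at hw
    generalize hQ : ({a, b, d, f, g} : Finset V) = Q at *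
    have ma : a ∈ Q := by rw [← hQ]; simp
    have mb : b ∈ Q := by rw [← hQ]; simp
    have md : d ∈ Q := by rw [← hQ]; simp
    have mf : f ∈ Q := by rw [← hQ]; simp
    have mg : g ∈ Q := by rw [← hQ]; simp
    have pair : ∀ x ∈ Q, ∀ y ∈ Q, ∀ u ∈ Q, ∀ v ∈ Q, ∀ z ∈ Q, x ≠ y → x ≠ u → x ≠ v → x ≠ z →
        y ≠ u → y ≠ v → y ≠ z → u ≠ v → u ≠ z → v ≠ z → w x + w y ≤ 2 * s + 1 := by
      intro x hx y hy u hu v hv z hz hxy hxu hxv hxz hyu hyv hyz huv huz hvz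
      by_contra hc
      have k1 : ¬ e x u = e y u := fun h => hc (H2 u hu x hx y hy hxu.symm hyu.symm hxy
        (by rw [he u x, he u y, h]))
      have k2 : ¬ e x v = e y v := fun h => hc (H2 v hv x hx y hy hxv.symm hyv.symm hxy
        (by rw [he v x, he v y, h]))
      have k3 : ¬ e x z = e y z := fun h => hc (H2 z hz x hx y hy hxz.symm hyz.symm hxy
        (by rw [he z x, he z y, h]))
      have m1 := H3 x hx y hy u hu v hv hxy hxu hxv hyu hyv huv
      have m2 := H3 x hx y hy u hu z hz hxy hxu hxz hyu hyz huz
      have m3 := H3 x hx y hy v hv z hz hxy hxv hxz hyv hyz hvz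
      have m4 := H3 y hy x hx u hu v hv hxy.symm hyu hyv hxu hxv huv
      have m5 := H3 y hy x hx u hu z hz hxy.symm hyu hyz hxu hxz huz
      have m6 := H3 y hy x hx v hv z hz hxy.symm hyv hyz hxv hxz hvz
      rw [he y x] at m4 m5 m6
      clear H H1 H2 H3 hcard hws ht hf hsum hc
      generalize e x y = e1 at *
      generalize e x u = e2 at *
      generalize e x v = e3 at *
      generalize e x z = e4 at *
      generalize e y u = e5 at *
      generalize e y v = e6 at *
      generalize e y z = e7 at *
      exact bool7 _ _ _ _ _ _ _ m1 m2 m3 m4 m5 m6 k1 k2 k3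
    have p1 := pair a ma b mb d md f mf g mg
      (by grind) (by grind) (by grind) (by grind) (by grind) (by grind) (by grind) (by grind) (by grind) (by grind)
    have p2 := pair a ma d md b mb f mf g mg
      (by grind) (by grind) (by grind) (by grind) (by grind) (by grind) (by grind) (by grind) (by grind) (by grind)
    have p3 := pair a ma f mf d md b mb g mg
      (by grind) (by grind) (by grind) (by grind) (by grind) (by grind) (by grind) (by grind) (by grind) (by grind)
    have p4 := pair a ma g mg d md f mf b mb
      (by grind) (by grind) (by grind) (by grind) (by grind) (by grind) (by grind) (by grind) (by grind) (by grind)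
    have p5 := pair b mb d md a ma f mf g mg
      (by grind) (by grind) (by grind) (by grind) (by grind) (by grind) (by grind) (by grind) (by grind) (by grind)
    have p6 := pair b mb f mf d md a ma g mg
      (by grind) (by grind) (by grind) (by grind) (by grind) (by grind) (by grind) (by grind) (by grind) (by grind)
    have p7 := pair b mb g mg d md f mf a ma
      (by grind) (by grind) (by grind) (by grind) (by grind) (by grind) (by grind) (by grind) (by grind) (by grind)
    have p8 := pair d md f mf b mb a ma g mg
      (by grind) (by grind) (by grind) (by grind) (by grind) (by grind) (by grind) (by grind) (by grind) (by grind)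
    have p9 := pair d md g mg b mb f mf a ma
      (by grind) (by grind) (by grind) (by grind) (by grind) (by grind) (by grind) (by grind) (by grind) (by grind)
    have p10 := pair f mf g mg d md b mb a ma
      (by grind) (by grind) (by grind) (by grind) (by grind) (by grind) (by grind) (by grind) (by grind) (by grind)
    have a1 := hws a ma
    have a2 := hws b mb
    have a3 := hws d md
    have a4 := hws f mf
    have a5 := hws g mg
    omega

/-- A Gallai coloring whose color degrees are at most `2 s + 1` has fewer than `5 s + 2`
vertices. -/
lemma low_degree {C : Type*} [DecidableEq C] {c : V → V → C} (hs : ∀ x y, c x y = c y x)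
    (hG : Gal c) (s : ℕ) (h2 : 2 ≤ s) (X : Finset V) (hX : X.card = 5 * s + 2)
    (hd : ∀ x ∈ X, ∀ i, (X.filter (fun y => y ≠ x ∧ c x y = i)).card ≤ 2 * s + 1) : False := by
  obtain ⟨p, r, b, hp1, ⟨x0, hx0, y0, hy0, hne⟩, hp3, hp4⟩ :=
    gallai_partition hs hG _ X hX (by omega)
  have hR : ∀ x ∈ X.image p, x ∈ X ∧ p x = x := by
    intro x hx
    obtain ⟨y, hy, rfl⟩ := Finset.mem_image.1 hx
    exact hp1 y hy
  refine reduced_bound (X.image p) (fun x => (X.filter (fun y => p y = x)).card)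
    (fun x y => decide (c x y = r)) s h2 (fun x y => by rw [hs]) ?_ ?_ ?_
  · intro x hx S hS t hSt
    obtain ⟨i, hi⟩ : ∃ i, ∀ y ∈ S, c x y = i := by
      cases t with
      | true => exact ⟨r, fun y hy => by simpa using hSt y hy⟩
      | false =>
        refine ⟨b, fun y hy => ?_⟩
        have h1 : ¬ c x y = r := by simpa using hSt y hy
        have h3 := Finset.mem_erase.1 (hS hy)
        have h4 := hp4 x (hR x hx).1 y (hR y h3.2).1
          (by rw [(hR x hx).2, (hR y h3.2).2]; exact h3.1.symm)
        tauto
    refine le_trans (le_of_eq ?_) (le_trans (Finset.card_le_card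
      (s := X.filter (fun y => p y ∈ S)) ?_) (hd x (hR x hx).1 i))
    · rw [Finset.card_eq_sum_card_fiberwise (f := p) (t := S)]
      · refine Finset.sum_congr rfl fun y hy => ?_
        congr 1
        ext z
        simp only [Finset.mem_filter]
        grind
      · intro z hz
        simpa using (Finset.mem_filter.1 (Finset.mem_coe.1 hz)).2
    · intro y hy
      obtain ⟨hyX, hyS⟩ := Finset.mem_filter.1 hy
      have h3 := Finset.mem_erase.1 (hS hyS)
      have h4 : p x ≠ p y := by rw [(hR x hx).2]; exact h3.1.symm
      refine Finset.mem_filter.2 ⟨hyX, fun h => h4 (by rw [h]), ?_⟩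
      rw [hp3 x (hR x hx).1 y hyX h4, (hR x hx).2]
      exact hi _ hyS
  · exact Finset.one_lt_card.2 ⟨p x0, Finset.mem_image_of_mem _ hx0, p y0,
      Finset.mem_image_of_mem _ hy0, hne⟩
  · rw [← hX, Finset.card_eq_sum_card_image p X]

end weights

section upper

variable {V : Type*} [DecidableEq V] {k : ℕ} {c : V → V → Fin k}

lemma copy_of (hs : ∀ x y, c x y = c y x) {n : ℕ} (hn : 2 ≤ n) {v u w : V} {i : Fin k}
    (L : Finset V) (hL : L.card = n) (hv : v ∉ L) (hvL : ∀ x ∈ L, c v x = i) (hu : u ∈ L)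
    (hw : w ∉ L) (hwv : w ≠ v) (huw : c u w = i) :
    IsMonoCopy (⊤ : SimpleGraph V) c (starPlusG n) := by
  have hcard : (L.erase u).card = n - 1 := by rw [Finset.card_erase_of_mem hu, hL]
  let g : Fin (n - 1) ≃ (L.erase u) := (Finset.equivFinOfCardEq hcard).symm
  have hg : ∀ j, (g j : V) ≠ u ∧ (g j : V) ∈ L := fun j => Finset.mem_erase.1 (g j).2
  have hgi : ∀ j j', (g j : V) = g j' → j = j' := fun j j' h =>
    g.injective (Subtype.ext h)
  let f : Fin (n + 2) → V := fun j =>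
    if h0 : j.val = 0 then v else if h1 : j.val < n then g ⟨j.val - 1, by omega⟩ else
      if j.val = n then u else w
  have f0 : ∀ j : Fin (n + 2), j.val = 0 → f j = v := fun j h => by
    simp only [f]; rw [dif_pos h]
  have f1 : ∀ j : Fin (n + 2), ∀ (h0 : j.val ≠ 0) (h1 : j.val < n),
      f j = g ⟨j.val - 1, by omega⟩ := fun j h h1 => by
    simp only [f]; rw [dif_neg h, dif_pos h1]
  have f2 : ∀ j : Fin (n + 2), j.val = n → f j = u := fun j h => by
    simp only [f]; rw [dif_neg (by omega), dif_neg (by omega), if_pos h]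
  have f3 : ∀ j : Fin (n + 2), j.val = n + 1 → f j = w := fun j h => by
    simp only [f]; rw [dif_neg (by omega), dif_neg (by omega), if_neg (by omega)]
  have hcase : ∀ j : Fin (n + 2), j.val = 0 ∨ (j.val ≠ 0 ∧ j.val < n) ∨ j.val = n ∨
      j.val = n + 1 := fun j => by have := j.2; omega
  have huv : u ≠ v := fun h => hv (h ▸ hu)
  have hwu : w ≠ u := fun h => hw (h ▸ hu)
  have hinj : Function.Injective f := by
    intro x y hxy
    apply Fin.ext
    rcases hcase x with hx | hx | hx | hx <;> rcases hcase y with hy | hy | hy | hy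
    all_goals first
      | omega
      | skip
    all_goals first
      | rw [f0 x hx] at hxy
      | rw [f1 x hx.1 hx.2] at hxy
      | rw [f2 x hx] at hxy
      | rw [f3 x hx] at hxy
    all_goals first
      | rw [f0 y hy] at hxy
      | rw [f1 y hy.1 hy.2] at hxy
      | rw [f2 y hy] at hxy
      | rw [f3 y hy] at hxy
    · exact absurd (hxy ▸ (hg _).2) hv
    · exact absurd hxy.symm huv
    · exact absurd hxy.symm hwv
    · exact absurd (hxy ▸ (hg _).2) hv
    · have := congrArg Fin.val (hgi _ _ hxy)
      simp only at this
      omega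
    · exact absurd hxy (hg _).1
    · exact absurd (hxy ▸ (hg _).2) hw
    · exact absurd hxy huv
    · exact absurd hxy.symm (hg _).1
    · exact absurd hxy.symm hwu
    · exact absurd hxy hwv
    · exact absurd (hxy ▸ (hg _).2) hw
    · exact absurd hxy hwu
  have hcol : ∀ a b : Fin (n + 2), a ≠ b →
      ((a = 0 ∧ b.val ≤ n) ∨ (a.val = n ∧ b.val = n + 1)) → c (f a) (f b) = i := by
    rintro a b hab (⟨h1, h2⟩ | ⟨h1, h2⟩)
    · have h1' : a.val = 0 := by rw [h1]; rfl
      have hb0 : b.val ≠ 0 := fun h => hab (Fin.ext (by omega))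
      rw [f0 a h1']
      rcases Nat.lt_or_ge b.val n with h | h
      · rw [f1 b hb0 h]; exact hvL _ (hg _).2
      · rw [f2 b (by omega)]; exact hvL _ hu
    · rw [f2 a h1, f3 b h2]; exact huw
  refine ⟨f, i, hinj, fun a b hab => ?_⟩
  rw [starPlusG, SimpleGraph.fromRel_adj] at hab
  refine ⟨by simpa using fun h => hab.1 (hinj h), ?_⟩
  rcases hab.2 with h | h
  · exact hcol a b hab.1 h
  · rw [hs]; exact hcol b a hab.1.symm h

/-- Color-`i` neighbours of `v` within `X`. -/
def nb (c : V → V → Fin k) (X : Finset V) (v : V) (i : Fin k) : Finset V :=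
  X.filter (fun y => y ≠ v ∧ c v y = i)

lemma mem_nb {X : Finset V} {v y : V} {i : Fin k} :
    y ∈ nb c X v i ↔ y ∈ X ∧ y ≠ v ∧ c v y = i := by
  simp [nb]

lemma nb_out (hs : ∀ x y, c x y = c y x) {n : ℕ} (hn : 2 ≤ n)
    (hno : ¬ IsMonoCopy (⊤ : SimpleGraph V) c (starPlusG n)) {X : Finset V} {v : V} {i : Fin k}
    (hN : n ≤ (nb c X v i).card) {u w : V} (hu : u ∈ nb c X v i)
    (hwv : w ≠ v) (hwu : w ≠ u) (huw : c u w = i) :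
    w ∈ nb c X v i ∧ (nb c X v i).card = n := by
  by_contra hcon
  have h1 : n ≤ ((nb c X v i).erase w).card := by
    by_cases h : w ∈ nb c X v i
    · have : (nb c X v i).card ≠ n := fun h' => hcon ⟨h, h'⟩
      rw [Finset.card_erase_of_mem h]; omega
    · rw [Finset.erase_eq_of_notMem h]; exact hN
  obtain ⟨L, hL1, hL2, hL3⟩ := Finset.exists_subsuperset_card_eq
    (s := {u}) (t := (nb c X v i).erase w)
    (by simpa using ⟨hwu.symm, hu⟩) (by simp; omega) h1
  have hLn : ∀ x ∈ L, x ∈ nb c X v i := fun x hx => Finset.mem_of_mem_erase (hL2 hx)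
  exact hno (copy_of hs hn L hL3 (fun h => (mem_nb.1 (hLn v h)).2.1 rfl)
    (fun x hx => (mem_nb.1 (hLn x hx)).2.2) (hL1 (by simp))
    (fun h => Finset.ne_of_mem_erase (hL2 h) rfl) hwv huw)

lemma big_degree (hs : ∀ x y, c x y = c y x) (hG : Gal c) {n : ℕ} (hn : 2 ≤ n)
    (hno : ¬ IsMonoCopy (⊤ : SimpleGraph V) c (starPlusG n)) {X : Finset V} {K : Finset (Fin k)}
    (hK : ∀ x ∈ X, ∀ y ∈ X, x ≠ y → c x y ∈ K) {v : V} (hv : v ∈ X) {i : Fin k}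
    (hN : n ≤ (nb c X v i).card) :
    X.card ≤ n + K.card ∨ (i ∈ K ∧ ∀ x ∈ X.erase v, ∀ y ∈ X.erase v, x ≠ y → c x y ≠ i) := by
  have hpos : (nb c X v i).Nonempty := Finset.card_pos.1 (by omega)
  obtain ⟨u0, hu0⟩ := hpos
  have hu0' := mem_nb.1 hu0
  have hiK : i ∈ K := by
    rw [← hu0'.2.2]; exact hK v hv u0 hu0'.1 hu0'.2.1.symm
  set Cc := insert v (nb c X v i) with hCc
  have hCcard : Cc.card = (nb c X v i).card + 1 :=
    Finset.card_insert_of_notMem fun h => (mem_nb.1 h).2.1 rfl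
  have hCX : Cc ⊆ X := by
    intro x hx
    rcases Finset.mem_insert.1 hx with h | h
    · rw [h]; exact hv
    · exact (mem_nb.1 h).1
  -- outside vertices
  have hout : ∀ w ∈ X \ Cc, c w v ≠ i ∧ ∀ x ∈ Cc, c w x = c w v := by
    intro w hw
    obtain ⟨hwX, hwC⟩ := Finset.mem_sdiff.1 hw
    have hwv : w ≠ v := fun h => hwC (h ▸ Finset.mem_insert_self _ _)
    have h1 : c w v ≠ i := fun h => hwC (Finset.mem_insert_of_mem
      (mem_nb.2 ⟨hwX, hwv, (hs _ _).trans h⟩))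
    refine ⟨h1, fun x hx => ?_⟩
    rcases Finset.mem_insert.1 hx with h | h
    · rw [h]
    · have hx' := mem_nb.1 h
      have hwx : w ≠ x := fun h => hwC (h ▸ hx)
      have h2 : c w x ≠ i := fun h' => hwC (Finset.mem_insert_of_mem
        (nb_out hs hn hno hN h hwv hwx ((hs _ _).trans h')).1)
      have := hG w v x hwv hx'.2.1.symm hwx
      have := hx'.2.2
      grind
  have hsub : ∀ w ∈ X \ Cc, Cc ⊆ nb c X w (c w v) := by
    intro w hw x hx
    exact mem_nb.2 ⟨hCX hx, fun h => (Finset.mem_sdiff.1 hw).2 (h ▸ hx), (hout w hw).2 x hx⟩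
  have hinj : ∀ w ∈ X \ Cc, ∀ w' ∈ X \ Cc, c w v = c w' v → w = w' := by
    intro w hw w' hw' h
    by_contra hne
    have hle := Finset.card_le_card (hsub w hw)
    have hvC : v ∈ Cc := Finset.mem_insert_self _ _
    have := (nb_out hs hn hno (X := X) (v := w) (i := c w v) (by omega) (hsub w hw hvC)
      (w := w') (Ne.symm hne) (fun h' => (Finset.mem_sdiff.1 hw').2 (h' ▸ hvC))
      ((hs _ _).trans h.symm)).2
    omega
  have hW : (X \ Cc).card ≤ (K.erase i).card := by
    refine Finset.card_le_card_of_injOn (fun w => c w v) ?_ ?_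
    · intro w hw
      have hw' := Finset.mem_coe.1 hw
      refine Finset.mem_coe.2 (Finset.mem_erase.2 ⟨(hout w hw').1, hK w ?_ v hv ?_⟩)
      · exact (Finset.mem_sdiff.1 hw').1
      · exact fun h => (Finset.mem_sdiff.1 hw').2 (h ▸ Finset.mem_insert_self _ _)
    · intro w hw w' hw' h
      exact hinj w hw w' hw' h
  rw [Finset.card_erase_of_mem hiK, Finset.card_sdiff_of_subset hCX] at hW
  have hKpos : 0 < K.card := Finset.card_pos.2 ⟨i, hiK⟩
  by_cases hn' : (nb c X v i).card = n
  · left; omega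
  right
  refine ⟨hiK, fun x hx y hy hxy h => ?_⟩
  obtain ⟨hxv, hxX⟩ := Finset.mem_erase.1 hx
  obtain ⟨hyv, hyX⟩ := Finset.mem_erase.1 hy
  by_cases hxN : x ∈ nb c X v i
  · exact hn' (nb_out hs hn hno hN hxN hyv hxy.symm h).2
  by_cases hyN : y ∈ nb c X v i
  · exact hn' (nb_out hs hn hno hN hyN hxv hxy ((hs _ _).trans h)).2
  have hxC : x ∈ X \ Cc := by simp [hCc, hxX, hxv, hxN]
  have hyC : y ∈ X \ Cc := by simp [hCc, hyX, hyv, hyN]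
  have h1 := (hout x hxC).1
  have h2 := (hout y hyC).1
  have h3 := hG x y v hxy hyv hxv
  have h4 := hinj x hxC y hyC
  grind

lemma upper (hs : ∀ x y, c x y = c y x) (hG : Gal c) {h : ℕ} (hh : 6 ≤ h)
    (hno : ¬ IsMonoCopy (⊤ : SimpleGraph V) c (starPlusG (2 * h))) :
    ∀ (m : ℕ) (K : Finset (Fin k)) (X : Finset V), K.card = m →
      (∀ x ∈ X, ∀ y ∈ X, x ≠ y → c x y ∈ K) →
      (if m ≤ 2 then 4 * h + m - 2 else 5 * h + m - 6) ≤ X.card → False := by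
  intro m
  induction m with
  | zero =>
    intro K X hKc hK hX
    obtain ⟨x, hx, y, hy, hxy⟩ := Finset.one_lt_card.1
      (show 1 < X.card by simp at hX; omega)
    have := hK x hx y hy hxy
    rw [Finset.card_eq_zero.1 hKc] at this
    simp at this
  | succ m ih =>
    intro K X hKc hK hX
    have hX' : m + 1 + 2 * h < X.card := by split_ifs at hX <;> omega
    by_cases hbig : ∃ v ∈ X, ∃ i, 2 * h ≤ (nb c X v i).card
    · obtain ⟨v, hv, i, hN⟩ := hbig
      rcases big_degree hs hG (by omega) hno hK hv hN with h1 | ⟨h1, h2⟩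
      · omega
      · refine ih (K.erase i) (X.erase v) (by rw [Finset.card_erase_of_mem h1]; omega) ?_ ?_
        · intro x hx y hy hxy
          exact Finset.mem_erase.2 ⟨h2 x hx y hy hxy, hK x (Finset.mem_of_mem_erase hx) y
            (Finset.mem_of_mem_erase hy) hxy⟩
        · rw [Finset.card_erase_of_mem hv]
          split_ifs at hX ⊢ <;> omega
    · push Not at hbig
      by_cases hm : m + 1 ≤ 2
      · rw [if_pos hm] at hX
        obtain ⟨v, hv⟩ : X.Nonempty := Finset.card_pos.1 (by omega)
        have h1 : X.erase v ⊆ K.biUnion (fun i => nb c X v i) := by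
          intro y hy
          obtain ⟨hyv, hyX⟩ := Finset.mem_erase.1 hy
          exact Finset.mem_biUnion.2 ⟨c v y, hK v hv y hyX hyv.symm,
            mem_nb.2 ⟨hyX, hyv, rfl⟩⟩
        have h2 := (Finset.card_le_card h1).trans (Finset.card_biUnion_le_card_mul K _ (2 * h - 1)
          (fun i _ => by have := hbig v hv i; omega))
        rw [Finset.card_erase_of_mem hv, hKc] at h2
        obtain rfl | rfl : m = 0 ∨ m = 1 := by omega
        · omega
        · omega
      · rw [if_neg hm] at hX
        obtain ⟨Y, hYX, hY⟩ := Finset.exists_subset_card_eq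
          (show 5 * (h - 1) + 2 ≤ X.card by omega)
        refine low_degree hs hG (h - 1) (by omega) Y hY fun x hx i => ?_
        have h1 := hbig x (hYX hx) i
        have h2 := Finset.card_le_card (Finset.filter_subset_filter
          (fun y => y ≠ x ∧ c x y = i) hYX)
        have h3 : (X.filter (fun y => y ≠ x ∧ c x y = i)).card = (nb c X x i).card := rfl
        omega

end upper

section lower

/-- The part (of the blown-up pentagon) containing the vertex `x`. -/
def part (h x : ℕ) : ℕ := min (x / (h - 1)) 4

/-- The extremal coloring. -/
def lcol (h x y : ℕ) : ℕ :=
  if 5 * h - 4 ≤ max x y then max x y - (5 * h - 4) + 3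
  else if part h x = part h y then 2
  else if part h x = (part h y + 1) % 5 ∨ part h y = (part h x + 1) % 5 then 0
  else 1

lemma lcol_symm (h x y : ℕ) : lcol h x y = lcol h y x := by
  unfold lcol
  rw [max_comm x y]
  grind

lemma lcol_gal (h x y z : ℕ) (h1 : lcol h x y ≠ lcol h y z) (h2 : lcol h y z ≠ lcol h x z)
    (h3 : lcol h x y ≠ lcol h x z) : False := by
  unfold lcol at h1 h2 h3
  generalize part h x = p at *
  generalize part h y = q at *
  generalize part h z = r at *
  grind

lemma part_card (h q : ℕ) (hh : 2 ≤ h) :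
    ((Finset.range (5 * h - 4)).filter (fun x => part h x = q)).card ≤
      if q = 4 then h else h - 1 := by
  have hpos : 0 < h - 1 := by omega
  split_ifs with hq
  · subst hq
    refine (Finset.card_le_card (t := Finset.Ico (4 * (h - 1)) (5 * h - 4)) ?_).trans ?_
    · intro x hx
      obtain ⟨h1, h2⟩ := Finset.mem_filter.1 hx
      have h3 : 4 ≤ x / (h - 1) := by unfold part at h2; omega
      have := (Nat.le_div_iff_mul_le hpos).1 h3
      exact Finset.mem_Ico.2 ⟨this, Finset.mem_range.1 h1⟩
    · rw [Nat.card_Ico]; omega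
  · refine (Finset.card_le_card
      (t := Finset.Ico (q * (h - 1)) (q * (h - 1) + (h - 1))) ?_).trans ?_
    · intro x hx
      obtain ⟨h1, h2⟩ := Finset.mem_filter.1 hx
      have h3 : x / (h - 1) = q := by unfold part at h2; omega
      have h4 := Nat.div_mul_le_self x (h - 1)
      have h5 := Nat.lt_div_mul_add (a := x) hpos
      rw [h3] at h4 h5
      exact Finset.mem_Ico.2 ⟨h4, h5⟩
    · rw [Nat.card_Ico]; omega

lemma part_lt (h x : ℕ) : part h x < 5 := by unfold part; omega

lemma two_parts (h q q' : ℕ) (hh : 2 ≤ h) (S : Finset ℕ) (hqq : q ≠ q')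
    (hS : ∀ x ∈ S, x < 5 * h - 4 ∧ (part h x = q ∨ part h x = q')) : S.card < 2 * h := by
  have h1 : S ⊆ ((Finset.range (5 * h - 4)).filter (fun x => part h x = q)) ∪
      ((Finset.range (5 * h - 4)).filter (fun x => part h x = q')) := by
    intro x hx
    have := hS x hx
    simp only [Finset.mem_union, Finset.mem_filter, Finset.mem_range]
    tauto
  have h2 := (Finset.card_le_card h1).trans (Finset.card_union_le _ _)
  have h3 := part_card h q hh
  have h4 := part_card h q' hh
  split_ifs at h3 h4 <;> omega

lemma lower_no_copy {k M h : ℕ} (hh : 6 ≤ h) (c : Fin M → Fin M → Fin k)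
    (hc : ∀ x y, (c x y).val = lcol h x.val y.val)
    (hcopy : IsMonoCopy (⊤ : SimpleGraph (Fin M)) c (starPlusG (2 * h))) : False := by
  obtain ⟨f, i, hinj, hf⟩ := hcopy
  have e1 : ∀ j : Fin (2 * h + 2), j.val ≠ 0 → j.val ≤ 2 * h →
      lcol h (f 0).val (f j).val = i.val := by
    intro j hj0 hj
    have hadj : (starPlusG (2 * h)).Adj 0 j := by
      rw [starPlusG, SimpleGraph.fromRel_adj]
      exact ⟨fun h0 => hj0 (by rw [← h0]; rfl), Or.inl (Or.inl ⟨rfl, hj⟩)⟩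
    rw [← hc, (hf 0 j hadj).2]
  let a : Fin (2 * h + 2) := ⟨2 * h, by omega⟩
  let b : Fin (2 * h + 2) := ⟨2 * h + 1, by omega⟩
  let d : Fin (2 * h + 2) := ⟨1, by omega⟩
  have e2 : lcol h (f a).val (f b).val = i.val := by
    have hadj : (starPlusG (2 * h)).Adj a b := by
      rw [starPlusG, SimpleGraph.fromRel_adj]
      exact ⟨fun h0 => by have := congrArg Fin.val h0; simp [a, b] at this,
        Or.inl (Or.inr ⟨rfl, rfl⟩)⟩
    rw [← hc, (hf a b hadj).2]
  have e3 := e1 d (by simp [d]) (by simp [d]; omega)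
  have hne : ∀ x y : Fin (2 * h + 2), x.val ≠ y.val → (f x).val ≠ (f y).val := fun x y hxy h' =>
    hxy (congrArg Fin.val (hinj (Fin.ext h')))
  by_cases hi : 3 ≤ i.val
  · have n1 := hne 0 a (by simp [a]; omega)
    have n2 := hne 0 b (by simp [b])
    have n3 := hne d a (by simp [a, d]; omega)
    have n4 := hne d b (by simp [b, d]; omega)
    unfold lcol at e2 e3
    split_ifs at e2 e3 <;> omega
  -- the image of the leaves
  let S : Finset ℕ := (Finset.univ.filter
    (fun j : Fin (2 * h + 2) => j.val ≠ 0 ∧ j.val ≤ 2 * h)).image (fun j => (f j).val)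
  have hScard : S.card = 2 * h := by
    rw [Finset.card_image_of_injective _ (fun x y hxy => hinj (Fin.ext hxy))]
    have : (Finset.univ.filter (fun j : Fin (2 * h + 2) => j.val ≠ 0 ∧ j.val ≤ 2 * h)).card
        = ((Finset.univ.filter
          (fun j : Fin (2 * h + 2) => j.val ≠ 0 ∧ j.val ≤ 2 * h)).image Fin.val).card :=
      (Finset.card_image_of_injective _ Fin.val_injective).symm
    rw [this]
    have h2 : ((Finset.univ.filter
          (fun j : Fin (2 * h + 2) => j.val ≠ 0 ∧ j.val ≤ 2 * h)).image Fin.val)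
          = Finset.Icc 1 (2 * h) := by
      ext x
      simp only [Finset.mem_image, Finset.mem_filter, Finset.mem_univ, true_and, Finset.mem_Icc]
      constructor
      · rintro ⟨j, hj, rfl⟩; omega
      · intro hx; exact ⟨⟨x, by omega⟩, by simp; omega, rfl⟩
    rw [h2, Nat.card_Icc]; omega
  have hS : ∀ x ∈ S, lcol h (f 0).val x = i.val := by
    intro x hx
    obtain ⟨j, hj, rfl⟩ := Finset.mem_image.1 hx
    have hj' := (Finset.mem_filter.1 hj).2
    exact e1 j hj'.1 hj'.2
  have hp := part_lt h (f 0).val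
  obtain h2 | h1 | h0 : i.val = 2 ∨ i.val = 1 ∨ i.val = 0 := by omega
  · have := two_parts h (part h (f 0).val) 5 (by omega) S (by omega) (by
      intro x hx
      have hx1 := hS x hx
      have hx2 := part_lt h x
      clear hS hScard hne e1 e2 e3
      unfold lcol at hx1
      split_ifs at hx1 <;> omega)
    omega
  · have := two_parts h ((part h (f 0).val + 2) % 5) ((part h (f 0).val + 3) % 5) (by omega) S
      (by omega) (by
      intro x hx
      have hx1 := hS x hx
      have hx2 := part_lt h x
      clear hS hScard hne e1 e2 e3
      unfold lcol at hx1
      split_ifs at hx1 <;> omega)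
    omega
  · have := two_parts h ((part h (f 0).val + 1) % 5) ((part h (f 0).val + 4) % 5) (by omega) S
      (by omega) (by
      intro x hx
      have hx1 := hS x hx
      have hx2 := part_lt h x
      clear hS hScard hne e1 e2 e3
      unfold lcol at hx1
      split_ifs at hx1 <;> omega)
    omega

end lower

end StarPlus

/-- For every `k ≥ 3` and even `n ≥ 12`, every Gallai `k`-coloring of the
complete graph on `5n/2 + k − 6` vertices contains a monochromatic copy of
`K⁺_{1,n}`; consequently `GR_k(K⁺_{1,n}) = 5n/2 + k − 6`. -/
theorem starPlus_gallai_upper (k n : ℕ) (hk : 3 ≤ k) (hn : 12 ≤ n) (hne : n % 2 = 0) :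
    (∀ c : Fin (5 * n / 2 + k - 6) → Fin (5 * n / 2 + k - 6) → Fin k,
      (∀ x y, c x y = c y x) →
      NoRainbowTriangle (⊤ : SimpleGraph (Fin (5 * n / 2 + k - 6))) c →
      IsMonoCopy (⊤ : SimpleGraph (Fin (5 * n / 2 + k - 6))) c (starPlusG n)) ∧
    GallaiRamsey k (starPlusG n) = 5 * n / 2 + k - 6 := by
  obtain ⟨h, rfl⟩ : ∃ h, n = 2 * h := ⟨n / 2, by omega⟩
  have hN : 5 * (2 * h) / 2 + k - 6 = 5 * h + k - 6 := by omega
  rw [hN]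
  have up : ∀ c : Fin (5 * h + k - 6) → Fin (5 * h + k - 6) → Fin k,
      (∀ x y, c x y = c y x) →
      NoRainbowTriangle (⊤ : SimpleGraph (Fin (5 * h + k - 6))) c →
      IsMonoCopy (⊤ : SimpleGraph (Fin (5 * h + k - 6))) c (starPlusG (2 * h)) := by
    intro c hs hG
    by_contra hno
    have hG' : StarPlus.Gal c := by
      intro x y z hxy hyz hxz
      by_contra hcon
      push Not at hcon
      exact hG ⟨x, y, z, by simpa using hxy, by simpa using hyz, by simpa using hxz,
        hcon.1, hcon.2.1, hcon.2.2⟩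
    refine StarPlus.upper hs hG' (by omega) hno k Finset.univ Finset.univ (by simp)
      (fun _ _ _ _ _ => Finset.mem_univ _) ?_
    rw [if_neg (by omega)]
    simp
  refine ⟨up, le_antisymm (Nat.sInf_le up) (le_csInf ⟨_, up⟩ fun M hM => ?_)⟩
  by_contra hlt
  have hk0 : 0 < k := by omega
  have hcol : ∀ x y : Fin M, StarPlus.lcol h x.val y.val < k := by
    intro x y
    have := x.2
    have := y.2
    unfold StarPlus.lcol
    split_ifs <;> omega
  refine StarPlus.lower_no_copy (k := k) (by omega) (fun x y => ⟨StarPlus.lcol h x.val y.val, hcol x y⟩)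
    (fun x y => rfl) (hM _ ?_ ?_)
  · intro x y
    exact Fin.ext (StarPlus.lcol_symm h x.val y.val)
  · rintro ⟨x, y, z, -, -, -, h1, h2, h3⟩
    simp only [ne_eq, Fin.mk.injEq] at h1 h2 h3
    exact StarPlus.lcol_gal h x.val y.val z.val h1 h2 h3
end

section
/- For every integer k ≥ 3 and every even integer n ≥ 12, there exist a graph G obtained from the complete graph on 5n/2 + k − 7 vertices by adding one new vertex w adjacent to exactly 2n + k − 6 of these vertices, and an edge k-coloring of G with no rainbow triangle and no monochromatic copy of K^+_{1,n}. Consequently the star-critical Gallai–Ramsey number satisfies GR*_k(K^+_{1,n}) ≥ 2n + k − 5. -/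
open SimpleGraph

section GP
variable {V C : Type*}

def GalC (c : V → V → C) : Prop := ∀ x y z, x ≠ y → y ≠ z → x ≠ z →
  c x y = c y z ∨ c y z = c x z ∨ c x y = c x z

def StepC (c : V → V → C) (S : Finset V) (i : C) (x y : V) : Prop :=
  x ∈ S ∧ y ∈ S ∧ x ≠ y ∧ c x y = i

abbrev RchC (c : V → V → C) (S : Finset V) (i : C) : V → V → Prop :=
  Relation.ReflTransGen (StepC c S i)

lemma rch_symm {c : V → V → C} (hs : ∀ x y, c x y = c y x) {S : Finset V} {i : C} {x y : V}
    (h : RchC c S i x y) : RchC c S i y x := by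
  induction h with
  | refl => exact Relation.ReflTransGen.refl
  | tail _ hb ih =>
    exact Relation.ReflTransGen.head ⟨hb.2.1, hb.1, hb.2.2.1.symm, by rw [hs]; exact hb.2.2.2⟩ ih

lemma rch_mem {c : V → V → C} {S : Finset V} {i : C} {x y : V}
    (h : RchC c S i x y) (hx : x ∈ S) : y ∈ S := by
  induction h with
  | refl => exact hx
  | tail _ hb ih => exact hb.2.1

lemma rch_const {c : V → V → C} (hs : ∀ x y, c x y = c y x) (hg : GalC c)
    {S : Finset V} {i : C} {x y x' : V} (hx : x ∈ S) (hy : y ∈ S)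
    (hn : ¬ RchC c S i x y) (h : RchC c S i x x') : c x y = c x' y := by
  induction h with
  | refl => rfl
  | @tail b d hb hd ih =>
    rw [ih]
    have h1 : ¬ StepC c S i b y := fun h => hn (hb.tail h)
    have h2 : ¬ StepC c S i d y := fun h => hn ((hb.tail hd).tail h)
    have h3 : b ≠ y := fun h => hn (h ▸ hb)
    have h4 : d ≠ y := fun h => hn (h ▸ (hb.tail hd))
    have e1 : c b y ≠ i := fun h => h1 ⟨hd.1, hy, h3, h⟩
    have e2 : c d y ≠ i := fun h => h2 ⟨hd.2.1, hy, h4, h⟩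
    rcases hg b d y hd.2.2.1 h4 h3 with h | h | h
    · exact absurd (h ▸ hd.2.2.2) e2
    · exact h.symm
    · exact absurd (h ▸ hd.2.2.2) e1

/-- first step of a path -/
lemma rch_head {c : V → V → C} {S : Finset V} {i : C} {x y : V}
    (h : RchC c S i x y) (hne : x ≠ y) : ∃ z ∈ S, x ≠ z ∧ c x z = i := by
  rcases Relation.ReflTransGen.cases_head h with h | ⟨z, hz, _⟩
  · exact absurd h hne
  · exact ⟨z, hz.2.1, hz.2.2.1, hz.2.2.2⟩

lemma disc [DecidableEq V] {c : V → V → C} (hs : ∀ x y, c x y = c y x) (hg : GalC c) (S : Finset V) :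
    (¬ ∃ a b, ∀ x ∈ S, ∀ y ∈ S, x ≠ y → c x y = a ∨ c x y = b) →
    (∃ x ∈ S, ∃ y ∈ S, x ≠ y) →
    ∃ i, (∃ x ∈ S, ∃ y ∈ S, x ≠ y ∧ c x y = i) ∧ ∃ x ∈ S, ∃ y ∈ S, ¬ RchC c S i x y := by
  induction S using Finset.induction_on with
  | empty => rintro _ ⟨x, hx, _⟩; simp at hx
  | @insert v T hv ih =>
    intro h2 _
    by_contra hcon
    have hconn : ∀ x ∈ insert v T, ∀ y ∈ insert v T, x ≠ y → ∀ z ∈ insert v T, ∀ t ∈ insert v T,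
        RchC c (insert v T) (c x y) z t := by
      intro x hx y hy hxy z hz t ht
      by_contra h
      exact hcon ⟨c x y, ⟨x, hx, y, hy, hxy, rfl⟩, z, hz, t, ht, h⟩
    have h3 : ∀ a b, ∃ x ∈ insert v T, ∃ y ∈ insert v T, x ≠ y ∧ c x y ≠ a ∧ c x y ≠ b := by
      intro a b
      by_contra h
      apply h2
      refine ⟨a, b, fun x hx y hy hxy => ?_⟩
      by_contra h'
      push Not at h'
      exact h ⟨x, hx, y, hy, hxy, h'⟩
    have hvS : v ∈ insert v T := Finset.mem_insert_self v T
    have hTS : ∀ t ∈ T, t ∈ insert v T := fun t ht => Finset.mem_insert_of_mem ht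
    -- every vertex incident to every used color
    have hinc : ∀ x ∈ insert v T, ∀ y ∈ insert v T, x ≠ y → ∀ z ∈ insert v T,
        ∃ t ∈ insert v T, z ≠ t ∧ c z t = c x y := by
      intro x hx y hy hxy z hz
      by_cases hzx : z = x
      · subst hzx; exact ⟨y, hy, hxy, rfl⟩
      · exact rch_head (hconn x hx y hy hxy z hz x hx) hzx
    by_cases hT : ∃ a b, ∀ x ∈ T, ∀ y ∈ T, x ≠ y → c x y = a ∨ c x y = b
    · obtain ⟨a, b, hab⟩ := hT
      obtain ⟨x, hx, y, hy, hxy, hxa, hxb⟩ := h3 a b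
      have hall : ∀ t ∈ T, c v t = c x y := by
        intro t ht
        obtain ⟨u, hu, htu, hc⟩ := hinc x hx y hy hxy t (hTS t ht)
        rcases Finset.mem_insert.1 hu with rfl | hu
        · rw [hs]; exact hc
        · rcases hab t ht u hu htu with h | h
          · exact absurd (hc ▸ h) hxa
          · exact absurd (hc ▸ h) hxb
      have hall' : ∀ t ∈ insert v T, v ≠ t → c v t = c x y := by
        intro t ht hvt
        rcases Finset.mem_insert.1 ht with rfl | ht
        · exact absurd rfl hvt
        · exact hall t ht
      obtain ⟨x', hx', y', hy', hxy', hd, _⟩ := h3 (c x y) a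
      obtain ⟨t, ht, hvt, hc⟩ := hinc x' hx' y' hy' hxy' v hvS
      exact hd (hc ▸ hall' t ht hvt)
    · have hne : ∃ x ∈ T, ∃ y ∈ T, x ≠ y := by
        by_contra h
        apply hT
        refine ⟨c v v, c v v, fun x hx y hy hxy => absurd ⟨x, hx, y, hy, hxy⟩ h⟩
      obtain ⟨i, ⟨x0, hx0, y0, hy0, hxy0, hi⟩, x, hx, y, hy, hxy⟩ := ih hT hne
      obtain ⟨x1, hx1, y1, hy1, hxy1, hd1, _⟩ := h3 i i
      obtain ⟨x2, hx2, y2, hy2, hxy2, he1, he2⟩ := h3 i (c x1 y1)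
      -- each component has an i-neighbour of v
      have hA : ∀ t ∈ T, ∃ z ∈ T, RchC c T i t z ∧ c z v = i := by
        intro t ht
        have h := hconn x0 (hTS _ hx0) y0 (hTS _ hy0) hxy0 t (hTS t ht) v hvS
        rw [hi] at h
        have key : ∀ u, RchC c (insert v T) i t u → (∃ z ∈ T, RchC c T i t z ∧ c z v = i) ∨
            (u ∈ T ∧ RchC c T i t u) := by
          intro u hu
          induction hu with
          | refl => exact Or.inr ⟨ht, Relation.ReflTransGen.refl⟩
          | @tail b d hb hd ih =>
            rcases ih with h | ⟨hbT, hbr⟩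
            · exact Or.inl h
            · rcases Finset.mem_insert.1 hd.2.1 with hdv | hdT
              · subst hdv
                exact Or.inl ⟨b, hbT, hbr, hd.2.2.2⟩
              · exact Or.inr ⟨hdT, hbr.tail ⟨hbT, hdT, hd.2.2.1, hd.2.2.2⟩⟩
        rcases key v h with h | h
        · exact h
        · exact absurd h.1 hv
      have hB : ∀ u ∈ T, c v u ≠ i → ∀ z ∈ T, ¬ RchC c T i u z → c z u = c v u := by
        intro u hu hui z hz hnr
        obtain ⟨z', hz', hr, hc⟩ := hA z hz
        have hnr' : ¬ RchC c T i z u := fun h => hnr (rch_symm hs h)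
        rw [rch_const hs hg hz hu hnr' hr]
        have hn2 : ¬ RchC c T i z' u := fun h => hnr' (hr.trans h)
        have hzu : z' ≠ u := fun h => hn2 (h ▸ Relation.ReflTransGen.refl)
        have hci : c z' u ≠ i := fun h => hn2 (Relation.ReflTransGen.single ⟨hz', hu, hzu, h⟩)
        have hvz : z' ≠ v := fun h => hv (h ▸ hz')
        have hvu : v ≠ u := fun h => hv (h ▸ hu)
        rcases hg z' v u hvz hvu hzu with h | h | h
        · exact absurd (h ▸ hc) hui
        · exact h.symm
        · exact absurd (h ▸ hc) hci
      have hC : ∀ u ∈ T, ∃ z ∈ T, ¬ RchC c T i u z := by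
        intro u hu
        by_contra h
        push Not at h
        exact hxy ((rch_symm hs (h x hx)).trans (h y hy))
      obtain ⟨u, hu, hvu, hcu⟩ := hinc x1 hx1 y1 hy1 hxy1 v hvS
      obtain ⟨u', hu', hvu', hcu'⟩ := hinc x2 hx2 y2 hy2 hxy2 v hvS
      have huT : u ∈ T := (Finset.mem_insert.1 hu).resolve_left hvu.symm
      have huT' : u' ∈ T := (Finset.mem_insert.1 hu').resolve_left hvu'.symm
      have d1 : c v u ≠ i := hcu ▸ hd1
      have d2 : c v u' ≠ i := hcu' ▸ he1
      have d3 : c v u' ≠ c v u := by rw [hcu, hcu']; exact he2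
      by_cases hr : RchC c T i u u'
      · obtain ⟨z, hz, hnz⟩ := hC u huT
        have hnz' : ¬ RchC c T i u' z := fun h => hnz (hr.trans h)
        have e1 := hB u huT d1 z hz hnz
        have e2 := hB u' huT' d2 z hz hnz'
        have e3 := rch_const hs hg huT hz hnz hr
        rw [hs z] at e1 e2
        exact d3 (by rw [← e1, ← e2, e3])
      · have e1 := hB u huT d1 u' huT' hr
        have e2 := hB u' huT' d2 u huT (fun h => hr (rch_symm hs h))
        rw [hs] at e2
        exact d3 (by rw [← e1, ← e2])

lemma gpart [DecidableEq V] {c : V → V → C} (hs : ∀ x y, c x y = c y x) (hg : GalC c) :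
    ∀ N (S : Finset V), S.card = N → (∃ x ∈ S, ∃ y ∈ S, x ≠ y) →
    ∃ (p : V → V) (a b : C), (∀ x ∈ S, ∀ y ∈ S, p x ≠ p y → c x y = a ∨ c x y = b) ∧
      (∀ x ∈ S, ∀ x' ∈ S, ∀ y ∈ S, p x = p x' → p x ≠ p y → c x y = c x' y) ∧
      ∃ x ∈ S, ∃ y ∈ S, p x ≠ p y := by
  classical
  intro N
  induction N using Nat.strong_induction_on with
  | _ N ih =>
  intro S hS hne
  by_cases h2 : ∃ a b, ∀ x ∈ S, ∀ y ∈ S, x ≠ y → c x y = a ∨ c x y = b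
  · obtain ⟨a, b, h⟩ := h2
    exact ⟨id, a, b, h, fun x _ x' _ y _ h _ => by simp only [id] at h; rw [h], hne⟩
  · obtain ⟨i, ⟨r, hr, r', hr', hrr, hi⟩, x, hx, y, hy, hxy⟩ := disc hs hg S h2 hne
    -- the module is the component of r
    set S' := S.filter (fun z => z = r ∨ ¬ RchC c S i r z) with hS'
    have hrS' : r ∈ S' := by simp [hS', hr]
    have hlt : S'.card < N := by
      rw [← hS]
      apply Finset.card_lt_card
      refine ⟨Finset.filter_subset _ _, fun h => ?_⟩
      have := h hr'
      simp only [hS', Finset.mem_filter] at this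
      rcases this.2 with h | h
      · exact hrr h.symm
      · exact h (Relation.ReflTransGen.single ⟨hr, hr', hrr, hi⟩)
    obtain ⟨z, hz, hnz⟩ : ∃ z ∈ S, ¬ RchC c S i r z := by
      by_contra h
      push Not at h
      exact hxy ((rch_symm hs (h x hx)).trans (h y hy))
    have hzS' : z ∈ S' := by simp [hS', hz, hnz]
    have hrz : r ≠ z := fun h => hnz (h ▸ Relation.ReflTransGen.refl)
    obtain ⟨p, a, b, h1, h3, h4⟩ := ih _ hlt S' rfl ⟨r, hrS', z, hzS', hrz⟩
    let ρ : V → V := fun z => if RchC c S i r z then r else z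
    have hρS : ∀ z ∈ S, ρ z ∈ S' := by
      intro z hz
      by_cases h : RchC c S i r z
      · simp only [ρ, h, if_true]; exact hrS'
      · simp only [ρ, h, if_false]; simp [hS', hz, h]
    have hρc : ∀ x ∈ S, ∀ y ∈ S, ρ x ≠ ρ y → c x y = c (ρ x) (ρ y) := by
      intro x hx y hy hne
      by_cases h : RchC c S i r x <;> by_cases h' : RchC c S i r y
      · simp [ρ, h, h'] at hne
      · simp only [ρ, h, h', if_true, if_false]
        exact (rch_const hs hg hr hy h' h).symm
      · simp only [ρ, h, h', if_true, if_false]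
        rw [hs x y, hs x r]
        exact (rch_const hs hg hr hx h h').symm
      · simp only [ρ, h, h', if_false]
    have hρid : ∀ z ∈ S', ρ z = z := by
      intro z hz
      simp only [hS', Finset.mem_filter] at hz
      rcases hz.2 with h | h
      · subst h; simp [ρ]
      · simp [ρ, h]
    refine ⟨fun z => p (ρ z), a, b, ?_, ?_, ?_⟩
    · intro x hx y hy hne
      rw [hρc x hx y hy (fun h => hne (by simp only [h]))]
      exact h1 _ (hρS x hx) _ (hρS y hy) hne
    · intro x hx x' hx' y hy he hne
      rw [hρc x hx y hy (fun h => hne (by simp only [h])),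
        hρc x' hx' y hy (fun h => hne (by simp only [he, h]))]
      exact h3 _ (hρS x hx) _ (hρS x' hx') _ (hρS y hy) he hne
    · obtain ⟨x, hx, y, hy, hne⟩ := h4
      exact ⟨x, (Finset.mem_filter.1 hx).1, y, (Finset.mem_filter.1 hy).1,
        by simp only [hρid x hx, hρid y hy]; exact hne⟩
end GP
lemma arith5 (m : ℕ) (hm : 5 ≤ m) (W0 W1 W2 W3 W4 : ℕ) (r01 r02 r03 r04 r12 r13 r14 r23 r24 r34 : Bool)
   (hs : W0+W1+W2+W3+W4 = 5*m+2)
   (a0 : (bif r01 then W1 else 0) + (bif r02 then W2 else 0) + (bif r03 then W3 else 0) + (bif r04 then W4 else 0) ≤ 2*m+1)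
   (b0 : (bif r01 then 0 else W1) + (bif r02 then 0 else W2) + (bif r03 then 0 else W3) + (bif r04 then 0 else W4) ≤ 2*m+1)
   (a1 : (bif r01 then W0 else 0) + (bif r12 then W2 else 0) + (bif r13 then W3 else 0) + (bif r14 then W4 else 0) ≤ 2*m+1)
   (b1 : (bif r01 then 0 else W0) + (bif r12 then 0 else W2) + (bif r13 then 0 else W3) + (bif r14 then 0 else W4) ≤ 2*m+1)
   (a2 : (bif r02 then W0 else 0) + (bif r12 then W1 else 0) + (bif r23 then W3 else 0) + (bif r24 then W4 else 0) ≤ 2*m+1)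
   (b2 : (bif r02 then 0 else W0) + (bif r12 then 0 else W1) + (bif r23 then 0 else W3) + (bif r24 then 0 else W4) ≤ 2*m+1)
   (a3 : (bif r03 then W0 else 0) + (bif r13 then W1 else 0) + (bif r23 then W2 else 0) + (bif r34 then W4 else 0) ≤ 2*m+1)
   (b3 : (bif r03 then 0 else W0) + (bif r13 then 0 else W1) + (bif r23 then 0 else W2) + (bif r34 then 0 else W4) ≤ 2*m+1)
   (a4 : (bif r04 then W0 else 0) + (bif r14 then W1 else 0) + (bif r24 then W2 else 0) + (bif r34 then W3 else 0) ≤ 2*m+1)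
   (b4 : (bif r04 then 0 else W0) + (bif r14 then 0 else W1) + (bif r24 then 0 else W2) + (bif r34 then 0 else W3) ≤ 2*m+1)
   (w0 : m ≤ W0) (w1 : m ≤ W1) (w2 : m ≤ W2) (w3 : m ≤ W3) (w4 : m ≤ W4) : False := by
  cases r01 <;> cases r02 <;> cases r03 <;> cases r04 <;> simp only [cond_true, cond_false] at * <;>
   first
   | omega
   | (cases r12 <;> cases r13 <;> cases r14 <;> simp only [cond_true, cond_false] at * <;>
       first
       | omega
       | (cases r23 <;> cases r24 <;> cases r34 <;> simp only [cond_true, cond_false] at * <;> omega))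
lemma arith4 (m : ℕ) (hm : 5 ≤ m) (W0 W1 W2 W3 : ℕ) (r01 r02 r03 r12 r13 r23 : Bool)
   (hs : W0+W1+W2+W3 = 5*m+2)
   (a0 : (bif r01 then W1 else 0) + (bif r02 then W2 else 0) + (bif r03 then W3 else 0) ≤ 2*m+1)
   (b0 : (bif r01 then 0 else W1) + (bif r02 then 0 else W2) + (bif r03 then 0 else W3) ≤ 2*m+1)
   (a1 : (bif r01 then W0 else 0) + (bif r12 then W2 else 0) + (bif r13 then W3 else 0) ≤ 2*m+1)
   (b1 : (bif r01 then 0 else W0) + (bif r12 then 0 else W2) + (bif r13 then 0 else W3) ≤ 2*m+1)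
   (a2 : (bif r02 then W0 else 0) + (bif r12 then W1 else 0) + (bif r23 then W3 else 0) ≤ 2*m+1)
   (b2 : (bif r02 then 0 else W0) + (bif r12 then 0 else W1) + (bif r23 then 0 else W3) ≤ 2*m+1)
   (a3 : (bif r03 then W0 else 0) + (bif r13 then W1 else 0) + (bif r23 then W2 else 0) ≤ 2*m+1)
   (b3 : (bif r03 then 0 else W0) + (bif r13 then 0 else W1) + (bif r23 then 0 else W2) ≤ 2*m+1)
   : False := by
  cases r01 <;> cases r02 <;> cases r03 <;> simp only [cond_true, cond_false] at * <;>
   first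
   | omega
   | (cases r12 <;> cases r13 <;> cases r23 <;> simp only [cond_true, cond_false] at * <;> omega)

lemma arithq (m : ℕ) (hm : 5 ≤ m) (q : ℕ) (hq : 2 ≤ q) (W : Fin q → ℕ) (r : Fin q → Fin q → Bool)
    (hr : ∀ i j, r i j = r j i) (hsum : ∑ i, W i = 5 * m + 2)
    (ha : ∀ j, ∑ l, (if l = j then 0 else bif r j l then W l else 0) ≤ 2 * m + 1)
    (hb : ∀ j, ∑ l, (if l = j then 0 else bif r j l then 0 else W l) ≤ 2 * m + 1) : False := by
  have hW : ∀ j, m ≤ W j := by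
    intro j
    have h1 := ha j
    have h2 := hb j
    have h3 : ∑ l, W l = ∑ l, (if l = j then 0 else bif r j l then W l else 0) +
        ∑ l, (if l = j then 0 else bif r j l then 0 else W l) + ∑ l, (if l = j then W l else 0) := by
      rw [← Finset.sum_add_distrib, ← Finset.sum_add_distrib]
      apply Finset.sum_congr rfl
      intro l _
      by_cases h : l = j
      · simp [h]
      · cases r j l <;> simp [h]
    simp only [Finset.sum_ite_eq', Finset.mem_univ, if_true] at h3
    omega
  have hq5 : q ≤ 5 := by
    have : ∑ i : Fin q, m ≤ ∑ i, W i := Finset.sum_le_sum (fun i _ => hW i)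
    simp at this
    by_contra h
    have : 6 * m ≤ q * m := Nat.mul_le_mul_right _ (by omega)
    omega
  interval_cases q
  · have a0 := ha 0; have a1 := ha 1; have b0 := hb 0; have b1 := hb 1
    have e10 := hr 1 0
    simp [Fin.sum_univ_two, e10] at a0 a1 b0 b1 hsum
    generalize r 0 1 = x at *
    cases x <;> simp at * <;> omega
  · have a0 := ha 0; have a1 := ha 1; have b0 := hb 0; have b1 := hb 1; have a2 := ha 2; have b2 := hb 2
    have e10 := hr 1 0; have e20 := hr 2 0; have e21 := hr 2 1
    simp [Fin.sum_univ_three, e10, e20, e21] at a0 a1 a2 b0 b1 b2 hsum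
    clear e10 e20 e21
    generalize r 0 1 = x at *
    generalize r 0 2 = y at *
    generalize r 1 2 = z at *
    cases x <;> cases y <;> cases z <;> simp at * <;> omega
  · have a0 := ha 0; have a1 := ha 1; have b0 := hb 0; have b1 := hb 1; have a2 := ha 2; have b2 := hb 2
    have a3 := ha 3; have b3 := hb 3
    have e10 := hr 1 0; have e20 := hr 2 0; have e21 := hr 2 1
    have e30 := hr 3 0; have e31 := hr 3 1; have e32 := hr 3 2
    simp [Fin.sum_univ_four, e10, e20, e21, e30, e31, e32] at a0 a1 a2 a3 b0 b1 b2 b3 hsum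
    apply arith4 m hm (W 0) (W 1) (W 2) (W 3) (r 0 1) (r 0 2) (r 0 3) (r 1 2) (r 1 3) (r 2 3) <;> assumption
  · have a0 := ha 0; have a1 := ha 1; have b0 := hb 0; have b1 := hb 1; have a2 := ha 2; have b2 := hb 2
    have a3 := ha 3; have b3 := hb 3; have a4 := ha 4; have b4 := hb 4
    have e10 := hr 1 0; have e20 := hr 2 0; have e21 := hr 2 1
    have e30 := hr 3 0; have e31 := hr 3 1; have e32 := hr 3 2
    have e40 := hr 4 0; have e41 := hr 4 1; have e42 := hr 4 2; have e43 := hr 4 3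
    simp [Fin.sum_univ_five, e10, e20, e21, e30, e31, e32, e40, e41, e42, e43] at a0 a1 a2 a3 a4 b0 b1 b2 b3 b4 hsum
    apply arith5 m hm (W 0) (W 1) (W 2) (W 3) (W 4) (r 0 1) (r 0 2) (r 0 3) (r 0 4) (r 1 2) (r 1 3) (r 1 4) (r 2 3) (r 2 4) (r 3 4) <;>
      first | assumption | exact hW _
section UP
variable {V C : Type*} [DecidableEq V] [DecidableEq C]

def NbC (c : V → V → C) (S : Finset V) (i : C) (v : V) : Finset V :=
  S.filter (fun x => x ≠ v ∧ c v x = i)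

lemma mem_NbC {c : V → V → C} {S : Finset V} {i : C} {v x : V} :
    x ∈ NbC c S i v ↔ x ∈ S ∧ x ≠ v ∧ c v x = i := by simp [NbC]

def NoPC (c : V → V → C) (n : ℕ) : Prop :=
  ∀ (v x y : V) (L : Finset V), v ≠ x → v ≠ y → x ≠ y → v ∉ L → x ∉ L → y ∉ L →
    n ≤ L.card + 1 → c x y = c v x → (∀ l ∈ L, c v l = c v x) → False

lemma gs {c : V → V → C} (hs : ∀ x y, c x y = c y x) (hg : GalC c) (m : ℕ) (hm : 5 ≤ m)
    (S : Finset V) (hS : S.card = 5 * m + 2)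
    (hd : ∀ v ∈ S, ∀ i, (NbC c S i v).card ≤ 2 * m + 1) : False := by
  have h1 : 1 < S.card := by omega
  rw [Finset.one_lt_card] at h1
  obtain ⟨p, a, b, hab, hcon, x0, hx0, y0, hy0, hne⟩ := gpart hs hg _ S rfl h1
  set I := S.image p with hI
  have hmem : ∀ x ∈ S, p x ∈ I := fun x hx => Finset.mem_image_of_mem p hx
  have hq : 2 ≤ I.card := Finset.one_lt_card.2 ⟨p x0, hmem _ hx0, p y0, hmem _ hy0, hne⟩
  let P : V → Fin I.card := fun x => if h : p x ∈ I then I.equivFin ⟨p x, h⟩ else ⟨0, by omega⟩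
  have hP : ∀ x ∈ S, ∀ y ∈ S, P x = P y ↔ p x = p y := by
    intro x hx y hy
    simp only [P, hmem x hx, hmem y hy, dif_pos, EmbeddingLike.apply_eq_iff_eq, Subtype.mk.injEq]
  have hsur : ∀ j, ∃ s ∈ S, P s = j := by
    intro j
    obtain ⟨s, hsS, hps⟩ := Finset.mem_image.1 (I.equivFin.symm j).2
    refine ⟨s, hsS, ?_⟩
    simp only [P, hmem s hsS, dif_pos]
    rw [← Equiv.eq_symm_apply]
    exact Subtype.ext hps
  choose s hsS hPs using hsur
  have hW : ∀ T : Finset V, T.card = ∑ l, (T.filter (fun x => P x = l)).card := fun T =>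
    Finset.card_eq_sum_card_fiberwise (fun x _ => Finset.mem_coe.2 (Finset.mem_univ _))
  have hcc : ∀ j l, l ≠ j → ∀ x ∈ S, P x = l → c (s j) x = c (s j) (s l) := by
    intro j l hlj x hx hxl
    rw [hs, hs (s j)]
    apply hcon x hx _ (hsS l) _ (hsS j)
    · rw [← hP x hx _ (hsS l), hPs, hxl]
    · rw [Ne, ← hP x hx _ (hsS j), hPs, hxl]; exact hlj
  refine arithq m hm I.card hq (fun l => (S.filter (fun x => P x = l)).card)
    (fun j l => decide (c (s j) (s l) = a)) (fun i j => by simp only [hs (s i)])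
    (by rw [← hW, hS]) ?_ ?_
  · intro j
    refine le_trans ?_ (hd (s j) (hsS j) a)
    rw [hW (NbC c S a (s j))]
    apply Finset.sum_le_sum
    intro l _
    by_cases hl : l = j
    · simp [hl]
    · by_cases hr : c (s j) (s l) = a
      · simp only [hl, if_false, hr, decide_true, cond_true]
        apply Finset.card_le_card
        intro x hx
        rw [Finset.mem_filter] at hx ⊢
        refine ⟨mem_NbC.2 ⟨hx.1, ?_, ?_⟩, hx.2⟩
        · rintro rfl; exact hl (by rw [← hx.2, hPs])
        · rw [hcc j l hl x hx.1 hx.2, hr]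
      · simp [hl, hr]
  · intro j
    refine le_trans ?_ (hd (s j) (hsS j) b)
    rw [hW (NbC c S b (s j))]
    apply Finset.sum_le_sum
    intro l _
    by_cases hl : l = j
    · simp [hl]
    · by_cases hr : c (s j) (s l) = a
      · simp [hl, hr]
      · simp only [hl, if_false, hr, decide_false, cond_false]
        have hrb : c (s j) (s l) = b := by
          refine (hab _ (hsS j) _ (hsS l) ?_).resolve_left hr
          rw [Ne, ← hP _ (hsS j) _ (hsS l), hPs, hPs]; exact fun h => hl h.symm
        apply Finset.card_le_card
        intro x hx
        rw [Finset.mem_filter] at hx ⊢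
        refine ⟨mem_NbC.2 ⟨hx.1, ?_, ?_⟩, hx.2⟩
        · rintro rfl; exact hl (by rw [← hx.2, hPs])
        · rw [hcc j l hl x hx.1 hx.2, hrb]

/-- outside vertices attach uniformly to a big star -/
lemma outside {c : V → V → C} (hs : ∀ x y, c x y = c y x) (hg : GalC c) {n : ℕ}
    (hP : NoPC c n) {S : Finset V} {v : V} {i : C} (hd : n ≤ (NbC c S i v).card)
    {a : V} (haS : a ∈ S) (hav : a ≠ v) (ha : c v a ≠ i) {x : V} (hx : x ∈ NbC c S i v) :
    a ≠ x ∧ c a x ≠ i ∧ c a x = c v a := by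
  have hx' := mem_NbC.1 hx
  have hax : a ≠ x := by rintro rfl; exact ha hx'.2.2
  have h1 : c a x ≠ i := by
    intro h
    refine hP v x a ((NbC c S i v).erase x) hx'.2.1.symm hav.symm hax.symm ?_ ?_ ?_ ?_ ?_ ?_
    · simp [mem_NbC]
    · simp
    · simp [mem_NbC, ha]
    · rw [Finset.card_erase_of_mem hx]; omega
    · rw [hs, h, hx'.2.2]
    · intro l hl
      rw [hx'.2.2]
      exact (mem_NbC.1 (Finset.mem_of_mem_erase hl)).2.2
  refine ⟨hax, h1, ?_⟩
  rcases hg v x a hx'.2.1.symm hax.symm hav.symm with h | h | h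
  · exact absurd (by rw [hs, ← h, hx'.2.2]) h1
  · rw [hs, h]
  · exact absurd (by rw [← h, hx'.2.2]) ha

lemma bigstar {c : V → V → C} (hs : ∀ x y, c x y = c y x) (hg : GalC c) {n : ℕ}
    (hP : NoPC c n) {S : Finset V} {v : V} {i : C} (hv : v ∈ S)
    (hd : n + 1 ≤ (NbC c S i v).card)
    {a b : V} (haS : a ∈ S) (hbS : b ∈ S) (hab : a ≠ b) (hav : a ≠ v) (hbv : b ≠ v) :
    c a b ≠ i := by
  intro hi
  have key : ∀ a b, a ∈ S → b ∈ S → a ≠ b → a ≠ v → b ≠ v → c a b = i → c v a ≠ i := by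
    intro a b haS hbS hab hav hbv hi ha
    refine hP v a b (((NbC c S i v).erase a).erase b) hav.symm hbv.symm hab ?_ ?_ ?_ ?_ ?_ ?_
    · simp [mem_NbC]
    · simp
    · simp
    · have h1 := Finset.pred_card_le_card_erase (s := NbC c S i v) (a := a)
      have h2 := Finset.pred_card_le_card_erase (s := (NbC c S i v).erase a) (a := b)
      omega
    · rw [hi, ha]
    · intro l hl
      rw [ha]
      exact (mem_NbC.1 (Finset.mem_of_mem_erase (Finset.mem_of_mem_erase hl))).2.2
  have ha := key a b haS hbS hab hav hbv hi
  have hb := key b a hbS haS hab.symm hbv hav (by rw [hs]; exact hi)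
  have hne : (NbC c S i v).Nonempty := Finset.card_pos.1 (by omega)
  obtain ⟨x, hx⟩ := hne
  have oa := fun {x} => outside hs hg hP (by omega) haS hav ha (x := x)
  have ob := fun {x} => outside hs hg hP (by omega) hbS hbv hb (x := x)
  have hxx : c a x = c b x := by
    rcases hg a b x hab (ob hx).1 (oa hx).1 with h | h | h
    · exact absurd (h ▸ hi) (ob hx).2.1
    · exact h.symm
    · exact absurd (h ▸ hi) (oa hx).2.1
  refine hP a x b ((NbC c S i v).erase x) (oa hx).1 hab (ob hx).1.symm ?_ ?_ ?_ ?_ ?_ ?_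
  · simp [mem_NbC, ha]
  · simp
  · simp [mem_NbC, hb]
  · rw [Finset.card_erase_of_mem hx]; omega
  · rw [hs x b, hxx]
  · intro l hl
    rw [(oa hx).2.2, (oa (Finset.mem_of_mem_erase hl)).2.2]

theorem upperC {c : V → V → C} (hs : ∀ x y, c x y = c y x) (hg : GalC c) (m : ℕ) (hm : 5 ≤ m)
    (hP : NoPC c (2 * m + 2)) : ∀ (t : ℕ) (S : Finset V) (K : Finset C), K.card = t →
    (∀ x ∈ S, ∀ y ∈ S, x ≠ y → c x y ∈ K) → 5 * m - 1 + t ≤ S.card → False := by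
  intro t
  induction t with
  | zero =>
    intro S K hK hSK hc
    have h1 : 1 < S.card := by omega
    obtain ⟨x, hx, y, hy, hxy⟩ := Finset.one_lt_card.1 h1
    have := hSK x hx y hy hxy
    rw [Finset.card_eq_zero.1 hK] at this
    simp at this
  | succ t ih =>
    intro S K hK hSK hc
    by_cases hbig : ∃ v ∈ S, ∃ i, 2 * m + 2 + 1 ≤ (NbC c S i v).card
    · obtain ⟨v, hv, i, hd⟩ := hbig
      have hne : (NbC c S i v).Nonempty := Finset.card_pos.1 (by omega)
      obtain ⟨x, hx⟩ := hne
      have hx' := mem_NbC.1 hx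
      have hiK : i ∈ K := by
        rw [← hx'.2.2]; exact hSK v hv x hx'.1 hx'.2.1.symm
      refine ih (S.erase v) (K.erase i) ?_ ?_ ?_
      · rw [Finset.card_erase_of_mem hiK]; omega
      · intro a ha b hb hab
        rw [Finset.mem_erase] at ha hb ⊢
        exact ⟨bigstar hs hg hP hv hd ha.2 hb.2 hab ha.1 hb.1, hSK a ha.2 b hb.2 hab⟩
      · rw [Finset.card_erase_of_mem hv]; omega
    · push Not at hbig
      have hsmall : ∀ v ∈ S, ∀ i, (NbC c S i v).card ≤ 2 * m + 1 := by
        intro v hv i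
        by_contra h
        have hlt : (insert v (NbC c S i v)).card < S.card := by
          have := Finset.card_insert_le v (NbC c S i v)
          have := hbig v hv i
          omega
        obtain ⟨y, hyS, hyn⟩ := Finset.exists_mem_notMem_of_card_lt_card hlt
        rw [Finset.mem_insert, mem_NbC] at hyn
        push Not at hyn
        have hyi : c v y ≠ i := hyn.2 hyS hyn.1
        have hsub : insert v (NbC c S i v) ⊆ NbC c S (c v y) y := by
          intro x hx
          rcases Finset.mem_insert.1 hx with rfl | hx
          · exact mem_NbC.2 ⟨hv, hyn.1.symm, hs _ _⟩
          · have := outside hs hg hP (by omega) hyS hyn.1 hyi hx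
            exact mem_NbC.2 ⟨(mem_NbC.1 hx).1, this.1.symm, this.2.2⟩
        have h1 := Finset.card_le_card hsub
        rw [Finset.card_insert_of_notMem (by simp [mem_NbC])] at h1
        have := hbig y hyS (c v y)
        omega
      by_cases ht : 2 ≤ t
      · obtain ⟨S', hS', hcard⟩ := Finset.exists_subset_card_eq (s := S) (n := 5 * m + 2) (by omega)
        refine gs hs hg m hm S' hcard (fun v hv i => le_trans (Finset.card_le_card ?_) (hsmall v (hS' hv) i))
        intro x hx
        rw [mem_NbC] at hx ⊢
        exact ⟨hS' hx.1, hx.2⟩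
      · obtain ⟨v, hv⟩ : S.Nonempty := Finset.card_pos.1 (by omega)
        have hsub : S.erase v ⊆ K.biUnion (fun i => NbC c S i v) := by
          intro x hx
          rw [Finset.mem_erase] at hx
          exact Finset.mem_biUnion.2 ⟨c v x, hSK v hv x hx.2 hx.1.symm, mem_NbC.2 ⟨hx.2, hx.1, rfl⟩⟩
        have h1 := Finset.card_le_card hsub
        have h2 := Finset.card_biUnion_le_card_mul K (fun i => NbC c S i v) (2 * m + 1)
          (fun i _ => hsmall v hv i)
        rw [Finset.card_erase_of_mem hv] at h1
        rw [hK] at h2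
        interval_cases t <;> omega
end UP
lemma noP_of_noCopy {V : Type*} [DecidableEq V] {k n : ℕ} (hn : 2 ≤ n) (G : SimpleGraph V)
    (hG : G = ⊤) {c : V → V → Fin k} (hs : ∀ x y, c x y = c y x)
    (h : ¬ IsMonoCopy G c (starPlusG n)) : NoPC c n := by
  intro v x y L hvx hvy hxy hvL hxL hyL hL hc hl
  apply h
  subst hG
  obtain ⟨L', hL', hcard⟩ := Finset.exists_subset_card_eq (s := L) (n := n - 1) (by omega)
  let e := L'.equivFin.symm
  rw [hcard] at e
  let f : Fin (n + 2) → V := fun j => if j.val = 0 then v else if j.val = n then x else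
    if h : j.val - 1 < n - 1 then (e ⟨j.val - 1, h⟩).1 else y
  have f0 : ∀ j : Fin (n + 2), j.val = 0 → f j = v := fun j hj => by
    simp only [f]; rw [if_pos hj]
  have fn : ∀ j : Fin (n + 2), j.val = n → f j = x := fun j hj => by
    simp only [f, hj]; rw [if_neg (by omega)]; simp
  have fn1 : ∀ j : Fin (n + 2), j.val = n + 1 → f j = y := fun j hj => by
    simp only [f, hj]; rw [if_neg (by omega), if_neg (by omega), dif_neg (by omega)]
  have fm : ∀ j : Fin (n + 2), 1 ≤ j.val → (hj : j.val < n) →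
      f j = (e ⟨j.val - 1, by omega⟩).1 := fun j h1 hj => by
    simp only [f]; rw [if_neg (by omega), if_neg (by omega), dif_pos (by omega)]
  have fmL : ∀ j : Fin (n + 2), 1 ≤ j.val → (hj : j.val < n) → f j ∈ L := fun j h1 hj => by
    rw [fm j h1 hj]; exact hL' (e _).2
  have cases4 : ∀ j : Fin (n + 2), j.val = 0 ∨ j.val = n ∨ j.val = n + 1 ∨ (1 ≤ j.val ∧ j.val < n) := by
    intro j; omega
  have hinj : Function.Injective f := by
    intro j l hjl
    rcases cases4 j with h1 | h1 | h1 | ⟨h1, h1'⟩ <;> rcases cases4 l with h2 | h2 | h2 | ⟨h2, h2'⟩ <;>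
      first
      | (apply Fin.ext; omega)
      | (exfalso
         have A := f0 j; have B := fn j; have D := fn1 j; have E := fmL j
         have A' := f0 l; have B' := fn l; have D' := fn1 l; have E' := fmL l
         simp only [h1, h2, true_implies] at A B D A' B' D'
         grind)
      | skip
    rw [fm j h1 h1', fm l h2 h2'] at hjl
    have := e.injective (Subtype.ext hjl)
    rw [Fin.mk.injEq] at this
    apply Fin.ext; omega
  have hcol : ∀ j : Fin (n + 2), 1 ≤ j.val → j.val ≤ n → c v (f j) = c v x := by
    intro j h1 h2
    rcases Nat.lt_or_ge j.val n with h3 | h3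
    · exact hl _ (fmL j h1 h3)
    · rw [fn j (by omega)]
  refine ⟨f, c v x, hinj, ?_⟩
  intro a b hab
  rw [starPlusG, SimpleGraph.fromRel_adj] at hab
  refine ⟨?_, ?_⟩
  · rw [SimpleGraph.top_adj]; exact fun h => hab.1 (hinj h)
  · have hne : a.val ≠ b.val := fun h => hab.1 (Fin.ext h)
    rcases hab.2 with (⟨h1, h2⟩ | ⟨h1, h2⟩) | (⟨h1, h2⟩ | ⟨h1, h2⟩)
    · have h1' : a.val = 0 := by simp [h1]
      rw [f0 a h1']; exact hcol b (by omega) h2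
    · rw [fn a h1, fn1 b h2]; exact hc
    · have h1' : b.val = 0 := by simp [h1]
      rw [f0 b h1', hs]; exact hcol a (by omega) h2
    · rw [fn b h1, fn1 a h2, hs]; exact hc
/-- colour of a pair of residues mod 5 -/
def crN (a b : ℕ) : ℕ := if a = b then 2 else if (a + 1) % 5 = b ∨ (b + 1) % 5 = a then 0 else 1

def colN (m a b : ℕ) : ℕ :=
  if 5 * m + 2 ≤ max a b then max a b - (5 * m + 2) + 3 else crN (a % 5) (b % 5)

lemma crN_le (a b : ℕ) : crN a b ≤ 2 := by unfold crN; split_ifs <;> omega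

lemma crN_comm (a b : ℕ) : crN a b = crN b a := by
  unfold crN; split_ifs <;> omega

lemma colN_comm (m a b : ℕ) : colN m a b = colN m b a := by
  unfold colN; rw [max_comm, crN_comm]

lemma crN_gal (a b d : Fin 5) : crN a b = crN b d ∨ crN b d = crN a d ∨ crN a b = crN a d := by
  revert a b d; unfold crN; decide

lemma colN_gal (m a b d : ℕ) (hab : a ≠ b) (hbd : b ≠ d) (had : a ≠ d) :
    colN m a b = colN m b d ∨ colN m b d = colN m a d ∨ colN m a b = colN m a d := by
  by_cases h : 5 * m + 2 ≤ max a (max b d)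
  · unfold colN
    rcases le_total a b with h1 | h1 <;> rcases le_total b d with h2 | h2 <;>
      rcases le_total a d with h3 | h3 <;> simp only [h1, h2, h3, max_eq_left, max_eq_right] at h ⊢ <;>
      first
      | (exfalso; omega)
      | simp [h]
  · have h1 : ¬ 5 * m + 2 ≤ max a b := by omega
    have h2 : ¬ 5 * m + 2 ≤ max b d := by omega
    have h3 : ¬ 5 * m + 2 ≤ max a d := by omega
    simp only [colN, h1, h2, h3, if_false]
    exact crN_gal ⟨a % 5, by omega⟩ ⟨b % 5, by omega⟩ ⟨d % 5, by omega⟩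

lemma cnt1 (T : Finset ℕ) (ρ q : ℕ) (h : ∀ b ∈ T, b % 5 = ρ ∧ b / 5 < q) : T.card ≤ q := by
  rw [← Finset.card_range q]
  apply Finset.card_le_card_of_injOn (fun b => b / 5)
  · intro b hb
    simpa using (h b hb).2
  · intro b hb b' hb' he
    have h1 := h b hb
    have h2 := h b' hb'
    simp only at he
    omega

lemma cnt2 (T : Finset ℕ) (ρ₁ q₁ ρ₂ q₂ : ℕ)
    (h : ∀ b ∈ T, (b % 5 = ρ₁ ∧ b / 5 < q₁) ∨ (b % 5 = ρ₂ ∧ b / 5 < q₂)) : T.card ≤ q₁ + q₂ := by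
  rw [← Finset.card_filter_add_card_filter_not (s := T) (fun b => b % 5 = ρ₁ ∧ b / 5 < q₁)]
  apply Nat.add_le_add
  · exact cnt1 _ ρ₁ q₁ (fun b hb => (Finset.mem_filter.1 hb).2)
  · exact cnt1 _ ρ₂ q₂ (fun b hb => (h b (Finset.mem_filter.1 hb).1).resolve_left
      (Finset.mem_filter.1 hb).2)

lemma cntT (m a i : ℕ) (hm : 5 ≤ m) (T : Finset ℕ) 
    (h : ∀ b ∈ T, b < 5 * m + 2 ∧ crN (a % 5) (b % 5) = i ∧ (a % 5 = 3 → b ≠ 5 * m + 1)) :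
    T.card ≤ 2 * m + 1 := by
  have hr : a % 5 < 5 := by omega
  generalize a % 5 = r at *
  by_cases hi2 : i = 2
  · refine (cnt1 T r (m + 1) fun b hb => ?_).trans (by omega)
    have := h b hb
    unfold crN at this
    split_ifs at this <;> omega
  by_cases hi0 : i = 0
  · have key : ∀ b ∈ T, b < 5 * m + 2 ∧ ((r + 1) % 5 = b % 5 ∨ (b % 5 + 1) % 5 = r) := by
      intro b hb
      have := h b hb
      unfold crN at this
      split_ifs at this <;> omega
    interval_cases r
    · refine (cnt2 T 1 (m+1) 4 m fun b hb => ?_).trans (by omega)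
      have := key b hb; omega
    · refine (cnt2 T 0 (m+1) 2 m fun b hb => ?_).trans (by omega)
      have := key b hb; omega
    · refine (cnt2 T 1 (m+1) 3 m fun b hb => ?_).trans (by omega)
      have := key b hb; omega
    · refine (cnt2 T 2 m 4 m fun b hb => ?_).trans (by omega)
      have := key b hb; omega
    · refine (cnt2 T 0 (m+1) 3 m fun b hb => ?_).trans (by omega)
      have := key b hb; omega
  · have key : ∀ b ∈ T, b < 5 * m + 2 ∧ (r ≠ b % 5 ∧ (r + 1) % 5 ≠ b % 5 ∧ (b % 5 + 1) % 5 ≠ r) ∧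
        (r = 3 → b ≠ 5 * m + 1) := by
      intro b hb
      have := h b hb
      unfold crN at this
      split_ifs at this <;> omega
    interval_cases r
    · refine (cnt2 T 2 m 3 m fun b hb => ?_).trans (by omega)
      have := key b hb; omega
    · refine (cnt2 T 3 m 4 m fun b hb => ?_).trans (by omega)
      have := key b hb; omega
    · refine (cnt2 T 0 (m+1) 4 m fun b hb => ?_).trans (by omega)
      have := key b hb; omega
    · refine (cnt2 T 0 (m+1) 1 m fun b hb => ?_).trans (by omega)
      have := key b hb; omega
    · refine (cnt2 T 1 (m+1) 2 m fun b hb => ?_).trans (by omega)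
      have := key b hb; omega

def labN (m M : ℕ) : Option (Fin M) → ℕ
  | none => 5 * m + 1
  | some x => if x.val < 5 * m + 1 then x.val else x.val + 1

lemma labN_inj (m M : ℕ) : Function.Injective (labN m M) := by
  intro x y h
  rcases x with _ | x <;> rcases y with _ | y <;> simp only [labN] at h
  · rfl
  · split_ifs at h <;> omega
  · split_ifs at h <;> omega
  · congr 1; apply Fin.ext; split_ifs at h <;> omega

lemma labN_le (m M : ℕ) (hM : 5 * m + 1 ≤ M) (x) : labN m M x ≤ M := by
  rcases x with _ | x <;> simp only [labN]
  · omega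
  · split_ifs <;> omega

def AN (m M : ℕ) : Finset (Fin M) :=
  Finset.univ.filter (fun x : Fin M => ¬ (x.val < 5 * m + 1 ∧ x.val % 5 = 3))

lemma AN_card (m M : ℕ) (hM : 5 * m + 1 ≤ M) : (AN m M).card = M - m := by
  have h1 := Finset.card_filter_add_card_filter_not (s := (Finset.univ : Finset (Fin M)))
    (fun x : Fin M => (x.val < 5 * m + 1 ∧ x.val % 5 = 3))
  have h2 : (Finset.univ.filter (fun x : Fin M => (x.val < 5 * m + 1 ∧ x.val % 5 = 3))).card
      = (Finset.univ : Finset (Fin m)).card := by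
    symm
    refine Finset.card_bij (fun j _ => ⟨5 * j.val + 3, by omega⟩) ?_ ?_ ?_
    · intro j _; simp; omega
    · intro j _ l _ h; simp at h; exact Fin.ext h
    · intro x hx
      simp at hx
      exact ⟨⟨x.val / 5, by omega⟩, Finset.mem_univ _, Fin.ext (by simp; omega)⟩
  simp only [Finset.card_univ, Fintype.card_fin] at h1 h2
  unfold AN
  omega

lemma addVertex_ne {M : ℕ} {A : Set (Fin M)} {x y} (h : (addVertex M A).Adj x y) : x ≠ y := h.ne

lemma construction (m k : ℕ) (hm : 5 ≤ m) (hk : 3 ≤ k) (M : ℕ) (hM : M = 5 * m + 1 + (k - 3)) :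
    ∃ c : Option (Fin M) → Option (Fin M) → Fin k, (∀ x y, c x y = c y x) ∧
      NoRainbowTriangle (addVertex M (↑(AN m M))) c ∧
      ¬ IsMonoCopy (addVertex M (↑(AN m M))) c (starPlusG (2 * m + 2)) := by
  have hlt : ∀ x y, colN m (labN m M x) (labN m M y) < k := by
    intro x y
    have h1 := labN_le m M (by omega) x
    have h2 := labN_le m M (by omega) y
    have h3 := crN_le (labN m M x % 5) (labN m M y % 5)
    unfold colN
    split_ifs <;> omega
  refine ⟨fun x y => ⟨colN m (labN m M x) (labN m M y), hlt x y⟩, ?_, ?_, ?_⟩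
  · intro x y; simp only [colN_comm]
  · rintro ⟨x, y, z, hxy, hyz, hxz, h1, h2, h3⟩
    simp only [ne_eq, Fin.mk.injEq] at h1 h2 h3
    have := colN_gal m _ _ _ ((labN_inj m M).ne hxy.ne) ((labN_inj m M).ne hyz.ne)
      ((labN_inj m M).ne hxz.ne)
    tauto
  · rintro ⟨f, i, hf, hadj⟩
    have hl := (labN_inj m M).comp hf
    have h0 : ∀ j : Fin (2 * m + 2 + 2), 1 ≤ j.val → j.val ≤ 2 * m + 2 →
        (starPlusG (2 * m + 2)).Adj 0 j := by
      intro j h1 h2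
      rw [starPlusG, SimpleGraph.fromRel_adj]
      exact ⟨fun h => by rw [← h] at h1; simp at h1, Or.inl (Or.inl ⟨rfl, h2⟩)⟩
    let e : Fin (2 * m + 2 + 2) := ⟨2 * m + 2, by omega⟩
    let e' : Fin (2 * m + 2 + 2) := ⟨2 * m + 2 + 1, by omega⟩
    let e1 : Fin (2 * m + 2 + 2) := ⟨1, by omega⟩
    by_cases hi : 3 ≤ i.val
    · have hee : (starPlusG (2 * m + 2)).Adj e e' := by
        rw [starPlusG, SimpleGraph.fromRel_adj]
        exact ⟨fun h => by simp [e, e'] at h, Or.inl (Or.inr ⟨rfl, rfl⟩)⟩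
      have a1 := congrArg Fin.val (hadj _ _ (h0 e1 (by simp [e1]) (by simp [e1]))).2
      have a2 := congrArg Fin.val (hadj _ _ hee).2
      simp only at a1 a2
      have b1 := crN_le (labN m M (f 0) % 5) (labN m M (f e1) % 5)
      have b2 := crN_le (labN m M (f e) % 5) (labN m M (f e') % 5)
      have n1 : labN m M (f 0) ≠ labN m M (f e) := hl.ne (by simp [e, Fin.ext_iff])
      have n2 : labN m M (f 0) ≠ labN m M (f e') := hl.ne (by simp [e', Fin.ext_iff])
      have n3 : labN m M (f e1) ≠ labN m M (f e) := hl.ne (by simp [e, e1, Fin.ext_iff])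
      have n4 : labN m M (f e1) ≠ labN m M (f e') := hl.ne (by simp [e', e1, Fin.ext_iff])
      unfold colN at a1 a2
      split_ifs at a1 a2 <;> omega
    · let g : Fin (2 * m + 2) → ℕ := fun j => labN m M (f ⟨j.val + 1, by omega⟩)
      have hg : Function.Injective g := by
        intro j l h
        have := hl h
        simp only [Fin.mk.injEq] at this
        exact Fin.ext (by omega)
      have hc := Finset.card_image_of_injective Finset.univ hg
      have hT := cntT m (labN m M (f 0)) i.val hm (Finset.univ.image g) ?_
      · rw [hc, Finset.card_univ, Fintype.card_fin] at hT
        omega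
      · intro b hb
        obtain ⟨j, _, rfl⟩ := Finset.mem_image.1 hb
        obtain ⟨had, hcol⟩ := hadj _ _ (h0 ⟨j.val + 1, by omega⟩ (by simp) (by simp; omega))
        have hcol := congrArg Fin.val hcol
        simp only at hcol
        have hmax : labN m M (f 0) < 5 * m + 2 ∧ g j < 5 * m + 2 := by
          simp only [colN] at hcol
          split_ifs at hcol <;> simp only [g] <;> omega
        refine ⟨hmax.2, ?_, ?_⟩
        · rw [← hcol, colN, if_neg]
          have h1 := hmax.1
          have h2 := hmax.2
          simp only [g] at h2
          omega
        · intro h3 h4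
          have hn : f ⟨j.val + 1, by omega⟩ = none := labN_inj m M h4
          rw [hn] at had
          rcases had with ⟨a, b, _, hb, _⟩ | ⟨a, ha, ⟨hx, _⟩ | ⟨_, hy⟩⟩
          · simp at hb
          · rw [hx] at h3
            have h5 := hmax.1
            rw [hx] at h5
            simp only [AN, Finset.coe_filter, Set.mem_ofPred_eq, Finset.mem_univ, true_and] at ha
            simp only [labN] at h3 h5
            split_ifs at h3 h5 <;> omega
          · simp at hy

lemma upperFin (m k N : ℕ) (hm : 5 ≤ m) (hk : 3 ≤ k) (hN : N = 5 * m + 2 + (k - 3))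
    (c : Fin N → Fin N → Fin k) (hs : ∀ x y, c x y = c y x)
    (hr : NoRainbowTriangle (⊤ : SimpleGraph (Fin N)) c) :
    IsMonoCopy (⊤ : SimpleGraph (Fin N)) c (starPlusG (2 * m + 2)) := by
  by_contra hcon
  have hP := noP_of_noCopy (by omega) _ rfl hs hcon
  have hg : GalC c := by
    intro x y z h1 h2 h3
    by_contra h
    push Not at h
    exact hr ⟨x, y, z, h1, h2, h3, h⟩
  refine upperC hs hg m hm hP k Finset.univ Finset.univ (by simp) (by simp) ?_
  simp; omega

lemma mono_sub {M k : ℕ} {α : Type*} {H : SimpleGraph α} {A B : Set (Fin M)} (hAB : A ⊆ B)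
    {c : Option (Fin M) → Option (Fin M) → Fin k} :
    (NoRainbowTriangle (addVertex M B) c → NoRainbowTriangle (addVertex M A) c) ∧
    (IsMonoCopy (addVertex M A) c H → IsMonoCopy (addVertex M B) c H) := by
  have hle : ∀ x y, (addVertex M A).Adj x y → (addVertex M B).Adj x y := by
    rintro x y (h | ⟨a, ha, h⟩)
    · exact Or.inl h
    · exact Or.inr ⟨a, hAB ha, h⟩
  constructor
  · rintro h ⟨x, y, z, h1, h2, h3, h4⟩
    exact h ⟨x, y, z, hle _ _ h1, hle _ _ h2, hle _ _ h3, h4⟩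
  · rintro ⟨f, i, hf, h⟩
    exact ⟨f, i, hf, fun a b hab => ⟨hle _ _ (h a b hab).1, (h a b hab).2⟩⟩

lemma GR_eq (m k : ℕ) (hm : 5 ≤ m) (hk : 3 ≤ k) :
    GallaiRamsey k (starPlusG (2 * m + 2)) = 5 * m + 2 + (k - 3) := by
  apply le_antisymm
  · exact Nat.sInf_le (fun c hs hr => upperFin m k _ hm hk rfl c hs hr)
  · refine le_csInf ⟨5 * m + 2 + (k - 3), fun c hs hr => upperFin m k _ hm hk rfl c hs hr⟩ ?_
    intro N hN
    by_contra hlt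
    obtain ⟨c, hs, hr, hc⟩ := construction m k hm hk (5 * m + 1 + (k - 3)) rfl
    have hle : N ≤ 5 * m + 1 + (k - 3) := by omega
    let ι : Fin N → Option (Fin (5 * m + 1 + (k - 3))) := fun x => some (Fin.castLE hle x)
    have hι : Function.Injective ι := fun x y h => by simpa [ι] using h
    have hadj : ∀ x y, x ≠ y → (addVertex (5 * m + 1 + (k - 3)) ↑(AN m (5 * m + 1 + (k - 3)))).Adj (ι x) (ι y) :=
      fun x y hxy => Or.inl ⟨_, _, rfl, rfl, fun h => hxy (by simpa using h)⟩
    obtain ⟨f, i, hf, h⟩ := hN (fun x y => c (ι x) (ι y)) (fun x y => hs _ _) (by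
      rintro ⟨x, y, z, h1, h2, h3, h4⟩
      exact hr ⟨ι x, ι y, ι z, hadj _ _ h1, hadj _ _ h2, hadj _ _ h3, h4⟩)
    exact hc ⟨ι ∘ f, i, hι.comp hf, fun a b hab => ⟨hadj _ _ (h a b hab).1, (h a b hab).2⟩⟩

/-- For every `k ≥ 3` and even `n ≥ 12`, the complete graph on `5n/2 + k − 7`
vertices plus an extra vertex joined to exactly `2n + k − 6` of them admits a
rainbow-triangle-free `k`-coloring with no monochromatic copy of `K⁺_{1,n}`;
consequently `GR*_k(K⁺_{1,n}) ≥ 2n + k − 5`. -/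
theorem starPlus_star_critical_lower (k n : ℕ) (hk : 3 ≤ k) (hn : 12 ≤ n)
    (hne : n % 2 = 0) :
    (∃ A : Finset (Fin (5 * n / 2 + k - 7)), A.card = 2 * n + k - 6 ∧
      ∃ c : Option (Fin (5 * n / 2 + k - 7)) → Option (Fin (5 * n / 2 + k - 7)) → Fin k,
        (∀ x y, c x y = c y x) ∧
        NoRainbowTriangle (addVertex (5 * n / 2 + k - 7) (↑A)) c ∧
        ¬ IsMonoCopy (addVertex (5 * n / 2 + k - 7) (↑A)) c (starPlusG n)) ∧
    2 * n + k - 5 ≤ GRstar k (starPlusG n) := by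
  obtain ⟨m, rfl⟩ : ∃ m, n = 2 * m + 2 := ⟨n / 2 - 1, by omega⟩
  have hm : 5 ≤ m := by omega
  have hM : 5 * (2 * m + 2) / 2 + k - 7 = 5 * m + 1 + (k - 3) := by omega
  have hG : GallaiRamsey k (starPlusG (2 * m + 2)) - 1 = 5 * (2 * m + 2) / 2 + k - 7 := by
    rw [GR_eq m k hm hk]; omega
  have hcard := AN_card m _ (show 5 * m + 1 ≤ 5 * (2 * m + 2) / 2 + k - 7 by omega)
  obtain ⟨c, hs, hr, hc⟩ := construction m k hm hk _ hM
  refine ⟨⟨AN m _, by rw [hcard]; omega, c, hs, hr, hc⟩, ?_⟩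
  rw [GRstar, hG]
  refine le_csInf ⟨5 * (2 * m + 2) / 2 + k - 7 + 1, ?_⟩ ?_
  · intro A hA
    have := Finset.card_le_univ A
    rw [hA, Fintype.card_fin] at this
    omega
  · intro s hs'
    by_contra hlt
    obtain ⟨A', hA', hcA⟩ := Finset.exists_subset_card_eq
      (s := AN m (5 * (2 * m + 2) / 2 + k - 7)) (n := s) (by rw [hcard]; omega)
    have hsub : (↑A' : Set (Fin (5 * (2 * m + 2) / 2 + k - 7))) ⊆ ↑(AN m (5 * (2 * m + 2) / 2 + k - 7)) :=
      Finset.coe_subset.2 hA'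
    exact hc ((mono_sub hsub).2 (hs' A' hcA c hs ((mono_sub (H := starPlusG (2 * m + 2)) hsub).1 hr)))
end

section
/- For every integer k ≥ 3 and every even integer n ≥ 12, every edge k-coloring with no rainbow triangle of the graph obtained from the complete graph on 5n/2 − 3 vertices by deleting one edge contains a monochromatic copy of the star K_{1,n}. Since GR_k(K_{1,n}) = 5n/2 − 3, this shows that K_{1,n} is not Gallai-Ramsey-full (although K_{1,n} is Ramsey-full for even n). -/
open SimpleGraph

section helpers

/-- Edges of `G` inside `W` whose color is neither `r` nor `b`. -/
def otherGraph {V : Type*} {k : ℕ} (G : SimpleGraph V) (c : V → V → Fin k)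
    (hs : ∀ x y, c x y = c y x) (W : Finset V) (r b : Fin k) : SimpleGraph V where
  Adj x y := G.Adj x y ∧ x ∈ W ∧ y ∈ W ∧ c x y ≠ r ∧ c x y ≠ b
  symm := by
    refine ⟨?_⟩
    rintro x y ⟨h1, h2, h3, h4, h5⟩
    rw [hs] at h4 h5
    exact ⟨h1.symm, h3, h2, h4, h5⟩
  loopless := by
    refine ⟨?_⟩
    intro x h
    exact G.loopless.irrefl x h.1

theorem norainbow {V : Type*} {k : ℕ} {G : SimpleGraph V} {c : V → V → Fin k}
    (hr : NoRainbowTriangle G c) {x y z : V} (h1 : G.Adj x y) (h2 : G.Adj y z)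
    (h3 : G.Adj x z) : c x y = c y z ∨ c y z = c x z ∨ c x y = c x z := by
  by_contra h
  push Not at h
  exact hr ⟨x, y, z, h1, h2, h3, h.1, h.2.1, h.2.2⟩

/-- Components are homogeneous as seen from an outside vertex. -/
theorem module_lemma {V : Type*} {k : ℕ} {G : SimpleGraph V} {c : V → V → Fin k}
    (hs : ∀ x y, c x y = c y x) (hr : NoRainbowTriangle G c) {W : Finset V} {r b : Fin k}
    {x : V} (hxW : x ∈ W) (hx : ∀ t ∈ W, t ≠ x → G.Adj x t) {y z : V}
    (hyz : (otherGraph G c hs W r b).Reachable y z)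
    (hxy : ¬ (otherGraph G c hs W r b).Reachable x y) : c x y = c x z := by
  obtain ⟨w⟩ := hyz
  induction w with
  | nil => rfl
  | @cons y t z h w ih =>
    have hxt : ¬ (otherGraph G c hs W r b).Reachable x t := fun h' =>
      hxy (h'.trans h.symm.reachable)
    rw [← ih hxt]
    obtain ⟨h1, h2, h3, h4, h5⟩ := h
    have ny : y ≠ x := by rintro rfl; exact hxy (SimpleGraph.Reachable.refl _)
    have nt : t ≠ x := by rintro rfl; exact hxt (SimpleGraph.Reachable.refl _)
    have ay := hx y h2 ny
    have at' := hx t h3 nt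
    have cy : c x y = r ∨ c x y = b := by
      by_contra hc
      push Not at hc
      exact hxy (SimpleGraph.Adj.reachable ⟨ay, hxW, h2, hc.1, hc.2⟩)
    have ct : c x t = r ∨ c x t = b := by
      by_contra hc
      push Not at hc
      exact hxt (SimpleGraph.Adj.reachable ⟨at', hxW, h3, hc.1, hc.2⟩)
    have := norainbow hr ay h1 at'
    grind

/-- `W` is split by two colors. -/
def Disc {V : Type*} {k : ℕ} (G : SimpleGraph V) (c : V → V → Fin k)
    (hs : ∀ x y, c x y = c y x) (W : Finset V) : Prop :=
  ∃ r b : Fin k, ∃ x ∈ W, ∃ y ∈ W, ¬ (otherGraph G c hs W r b).Reachable x y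

theorem reach_out {V : Type*} [DecidableEq V] {k : ℕ} {G : SimpleGraph V} {c : V → V → Fin k}
    (hs : ∀ x y, c x y = c y x) {W : Finset V} {r b : Fin k} {v : V}
    {x : V} (hxW : x ∈ W) (hv : v ∉ W)
    (h : (otherGraph G c hs (insert v W) r b).Reachable x v) :
    ∃ y ∈ W, (otherGraph G c hs W r b).Reachable x y ∧ G.Adj v y ∧ c v y ≠ r ∧ c v y ≠ b := by
  generalize hU : insert v W = U at h
  obtain ⟨w⟩ := h
  induction w with
  | nil => exact absurd hxW hv
  | @cons x t v h w ih =>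
    obtain ⟨h1, h2, h3, h4, h5⟩ := h
    by_cases htv : t = v
    · subst htv
      rw [hs] at h4 h5
      exact ⟨x, hxW, SimpleGraph.Reachable.refl _, h1.symm, h4, h5⟩
    · have htW : t ∈ W := by
        rw [← hU] at h3
        rcases Finset.mem_insert.1 h3 with h | h
        · exact absurd h htv
        · exact h
      obtain ⟨y, hy, hy2, hy3⟩ := ih htW hv hU
      refine ⟨y, hy, SimpleGraph.Reachable.trans ?_ hy2, hy3⟩
      exact SimpleGraph.Adj.reachable ⟨h1, hxW, htW, h4, h5⟩

theorem insert_disc {V : Type*} [DecidableEq V] {k : ℕ} {G : SimpleGraph V} {c : V → V → Fin k}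
    (hs : ∀ x y, c x y = c y x) (hr : NoRainbowTriangle G c) {W : Finset V} {v : V}
    (hv : v ∉ W) (hW : ∀ x ∈ W, ∀ y ∈ W, y ≠ x → G.Adj x y) (hd : Disc G c hs W) :
    Disc G c hs (insert v W) := by
  obtain ⟨r, b, x0, hx0, x1, hx1, hn⟩ := hd
  by_contra hcon
  have hall : ∀ r b : Fin k, ∀ x ∈ insert v W, ∀ y ∈ insert v W,
      (otherGraph G c hs (insert v W) r b).Reachable x y := by
    intro r b x hx y hy
    by_contra h
    exact hcon ⟨r, b, x, hx, y, hy, h⟩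
  have vin : v ∈ insert v W := Finset.mem_insert_self v W
  have win : ∀ x ∈ W, x ∈ insert v W := fun x hx => Finset.mem_insert_of_mem hx
  have key : ∀ x ∈ W, ∃ y ∈ W, (otherGraph G c hs W r b).Reachable x y ∧ G.Adj v y ∧
      c v y ≠ r ∧ c v y ≠ b := fun x hx =>
    reach_out hs hx hv (hall r b x (win x hx) v vin)
  have two : ∀ x ∈ W, ∀ y ∈ W, ¬ (otherGraph G c hs W r b).Reachable x y →
      G.Adj x y ∧ (c x y = r ∨ c x y = b) := by
    intro x hx y hy hxy
    have hne : y ≠ x := by rintro rfl; exact hxy (SimpleGraph.Reachable.refl _)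
    refine ⟨hW x hx y hy hne, ?_⟩
    by_contra hc
    push Not at hc
    exact hxy (SimpleGraph.Adj.reachable ⟨hW x hx y hy hne, hx, hy, hc.1, hc.2⟩)
  obtain ⟨y0, hy0, r0, a0, c0, d0⟩ := key x0 hx0
  obtain ⟨y1, hy1, r1, a1, c1, d1⟩ := key x1 hx1
  have hn' : ¬ (otherGraph G c hs W r b).Reachable y0 y1 := fun h =>
    hn (r0.trans (h.trans r1.symm))
  -- two far non-rb neighbours have the same colour
  have same : ∀ x ∈ W, ∀ y ∈ W, ¬ (otherGraph G c hs W r b).Reachable x y →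
      G.Adj v x → G.Adj v y → c v x ≠ r → c v x ≠ b → c v y ≠ r → c v y ≠ b →
      c v x = c v y := by
    intro x hx y hy hxy ax ay p1 p2 p3 p4
    obtain ⟨q1, q2⟩ := two x hx y hy hxy
    have := norainbow hr ax q1 ay
    grind
  have hs01 := same y0 hy0 y1 hy1 hn' a0 a1 c0 d0 c1 d1
  have far : ∀ x, ∃ y ∈ W, ¬ (otherGraph G c hs W r b).Reachable x y ∧ G.Adj v y ∧
      c v y ≠ r ∧ c v y ≠ b ∧ c v y = c v y0 := by
    intro x
    by_cases h : (otherGraph G c hs W r b).Reachable x y0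
    · exact ⟨y1, hy1, fun h' => hn' (h.symm.trans h'), a1, c1, d1, hs01.symm⟩
    · exact ⟨y0, hy0, h, a0, c0, d0, rfl⟩
  have allS : ∀ z ∈ W, G.Adj v z → c v z = r ∨ c v z = b ∨ c v z = c v y0 := by
    intro z hz az
    by_contra hc
    push Not at hc
    obtain ⟨y, hy, h1, h2, h3, h4, h5⟩ := far z
    exact hc.2.2 ((same z hz y hy h1 az h2 hc.1 hc.2.1 h3 h4).trans h5)
  have redto : ∀ x ∈ W, G.Adj v x → (c v x = r ∨ c v x = b) → ∀ y ∈ W,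
      ¬ (otherGraph G c hs W r b).Reachable x y → G.Adj v y → c v y ≠ r → c v y ≠ b →
      c x y = c v x := by
    intro x hx ax cx y hy hxy ay p1 p2
    obtain ⟨q1, q2⟩ := two x hx y hy hxy
    have := norainbow hr ax q1 ay
    grind
  have iso : ∀ p q : Fin k, (∀ z ∈ W, G.Adj v z → c v z = p ∨ c v z = q) → False := by
    intro p q h
    obtain ⟨w⟩ := hall p q v vin x0 (win x0 hx0)
    cases w with
    | nil => exact hv hx0
    | cons h' w =>
      obtain ⟨h1, h2, h3, h4, h5⟩ := h'
      rcases Finset.mem_insert.1 h3 with h3 | h3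
      · subst h3; exact G.loopless.irrefl _ h1
      · rcases h _ h3 h1 with h | h
        · exact h4 h
        · exact h5 h
  by_cases hA : ∃ x ∈ W, G.Adj v x ∧ c v x = r
  · by_cases hB : ∃ x ∈ W, G.Adj v x ∧ c v x = b
    · obtain ⟨x, hx, ax, cx⟩ := hA
      obtain ⟨x', hx', ax', cx'⟩ := hB
      have hrb : r = b := by
        by_cases hxx : (otherGraph G c hs W r b).Reachable x x'
        · obtain ⟨y, hy, h1, h2, h3, h4, h5⟩ := far x
          have e1 := redto x hx ax (Or.inl cx) y hy h1 h2 h3 h4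
          have e2 := redto x' hx' ax' (Or.inr cx') y hy (fun h => h1 (hxx.trans h)) h2 h3 h4
          have e3 := module_lemma hs hr hy (fun t ht hne => hW y hy t ht hne) hxx
            (fun h => h1 h.symm)
          rw [hs x] at e1
          rw [hs x'] at e2
          rw [← cx, ← cx', ← e1, ← e2, e3]
        · obtain ⟨y, hy, h1, h2, h3, h4⟩ := key x' hx'
          obtain ⟨y', hy', h1', h2', h3', h4'⟩ := key x hx
          have e1 := redto x hx ax (Or.inl cx) y hy (fun h => hxx (h.trans h1.symm)) h2 h3 h4
          have e2 := redto x' hx' ax' (Or.inr cx') y' hy'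
            (fun h => hxx (h1'.trans h.symm)) h2' h3' h4'
          have e3 := module_lemma hs hr hx (fun t ht hne => hW x hx t ht hne) h1 hxx
          have e4 := module_lemma hs hr hx' (fun t ht hne => hW x' hx' t ht hne) h1'
            (fun h => hxx h.symm)
          rw [← cx, ← cx', ← e1, ← e2, ← e3, ← e4, hs]
      apply iso r (c v y0)
      intro z hz az
      have := allS z hz az
      grind
    · apply iso r (c v y0)
      intro z hz az
      have := allS z hz az
      grind
  · apply iso b (c v y0)
    intro z hz az
    have := allS z hz az
    grind

theorem clique_disc {V : Type*} [DecidableEq V] {k : ℕ} {G : SimpleGraph V} {c : V → V → Fin k}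
    (hs : ∀ x y, c x y = c y x) (hr : NoRainbowTriangle G c) (W : Finset V) :
    (∀ x ∈ W, ∀ y ∈ W, y ≠ x → G.Adj x y) → 2 ≤ W.card → Disc G c hs W := by
  induction W using Finset.induction_on with
  | empty => intro _ h; simp at h
  | insert v W hv ih =>
    intro hW hc
    rw [Finset.card_insert_of_notMem hv] at hc
    by_cases h1 : W.card = 1
    · obtain ⟨a, rfl⟩ := Finset.card_eq_one.1 h1
      have hva : v ≠ a := by simpa using hv
      refine ⟨c v a, c v a, v, by simp, a, by simp, ?_⟩
      rintro ⟨w⟩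
      cases w with
      | nil => exact hva rfl
      | cons h' w =>
        obtain ⟨h1, h2, h3, h4, h5⟩ := h'
        simp only [Finset.mem_insert, Finset.mem_singleton] at h3
        rcases h3 with h3 | h3
        · subst h3; exact G.loopless.irrefl _ h1
        · subst h3; exact h4 rfl
    · apply insert_disc hs hr hv
      · intro x hx y hy
        exact hW x (Finset.mem_insert_of_mem hx) y (Finset.mem_insert_of_mem hy)
      · apply ih
        · intro x hx y hy
          exact hW x (Finset.mem_insert_of_mem hx) y (Finset.mem_insert_of_mem hy)
        · omega

theorem k4_lemma (c1 c2 c3 c4 c5 c6 : Bool) (p01 p23 p02 p13 p03 p12 : Prop)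
    (x0 : ¬ (c1 = c2 ∧ c1 = c3)) (x1 : ¬ (c1 = c4 ∧ c1 = c5)) (x2 : ¬ (c2 = c4 ∧ c2 = c6))
    (x3 : ¬ (c3 = c5 ∧ c3 = c6))
    (b01 : c2 = c4 → p01) (c01 : c3 = c5 → p01) (b23 : c2 = c3 → p23) (c23 : c4 = c5 → p23)
    (b02 : c1 = c4 → p02) (c02 : c3 = c6 → p02) (b13 : c1 = c3 → p13) (c13 : c4 = c6 → p13)
    (b03 : c1 = c5 → p03) (c03 : c2 = c6 → p03) (b12 : c1 = c2 → p12) (c12 : c5 = c6 → p12)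
    (f1 : ¬ (p01 ∧ p23)) (f2 : ¬ (p02 ∧ p13)) (f3 : ¬ (p03 ∧ p12)) : False := by
  cases c1 <;> cases c2 <;> cases c3 <;> cases c4 <;> cases c5 <;> cases c6 <;> simp_all

theorem k5_lemma (c1 c2 c3 c4 c5 c6 c7 : Bool) (p : Prop)
    (t1 : ¬ (c1 = c2 ∧ c1 = c3)) (t2 : ¬ (c1 = c2 ∧ c1 = c4)) (t3 : ¬ (c1 = c3 ∧ c1 = c4))
    (t4 : ¬ (c1 = c5 ∧ c1 = c6)) (t5 : ¬ (c1 = c5 ∧ c1 = c7)) (t6 : ¬ (c1 = c6 ∧ c1 = c7))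
    (ux : c2 = c5 → p) (uy : c3 = c6 → p) (uz : c4 = c7 → p) : p := by
  cases c1 <;> cases c2 <;> cases c3 <;> cases c4 <;> cases c5 <;> cases c6 <;> cases c7 <;>
    simp_all

/-- Weighted two-colored complete graph on at most five vertices. -/
theorem weights {q m : ℕ} (hm : 6 ≤ m) (w : Fin q → ℕ) (e : Fin q → Fin q → Bool)
    (hs : ∀ i j, e i j = e j i) (hw : ∀ i, m - 1 ≤ w i) (hq : 2 ≤ q)
    (htot : ∑ i, w i = 5 * m - 3)
    (hd : ∀ i a, ∑ j with j ≠ i ∧ e i j = a, w j ≤ 2 * m - 1) : False := by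
  have hsub : ∀ i a (s : Finset (Fin q)), (∀ j ∈ s, j ≠ i ∧ e i j = a) →
      ∑ j ∈ s, w j ≤ 2 * m - 1 := by
    intro i a s h
    refine le_trans (Finset.sum_le_sum_of_subset ?_) (hd i a)
    intro j hj
    simpa using h j hj
  have P1 : ∀ i j, j ≠ i → w j ≤ 2 * m - 1 := by
    intro i j h
    have := hsub i (e i j) {j} (by simpa using h)
    simpa using this
  have P2 : ∀ i j l, j ≠ i → l ≠ i → j ≠ l → e i j = e i l → w j + w l ≤ 2 * m - 1 := by
    intro i j l h1 h2 h3 h4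
    have := hsub i (e i j) {j, l} (by simp [h1, h2, h4])
    rwa [Finset.sum_pair h3] at this
  have P3 : ∀ i j l t, j ≠ i → l ≠ i → t ≠ i → j ≠ l → j ≠ t → l ≠ t →
      ¬ (e i j = e i l ∧ e i j = e i t) := by
    rintro i j l t h1 h2 h3 h4 h5 h6 ⟨h7, h8⟩
    have := hsub i (e i j) {j, l, t} (by simp [h1, h2, h3, ← h7, ← h8])
    rw [Finset.sum_insert (by simp [h4, h5]), Finset.sum_pair h6] at this
    have := hw j
    have := hw l
    have := hw t
    omega
  have hq5 : q ≤ 5 := by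
    by_contra h
    have h1 : ∑ i : Fin q, (m - 1) ≤ ∑ i, w i := Finset.sum_le_sum fun i _ => hw i
    rw [htot] at h1
    simp at h1
    have : 6 * (m - 1) ≤ q * (m - 1) := Nat.mul_le_mul_right _ (by omega)
    omega
  have P4 : ∀ a b x y z : Fin q, a ≠ b → a ≠ x → a ≠ y → a ≠ z → b ≠ x → b ≠ y → b ≠ z →
      x ≠ y → x ≠ z → y ≠ z → w a + w b ≤ 2 * m - 1 := by
    intro a b x y z h1 h2 h3 h4 h5 h6 h7 h8 h9 h10
    have t1 := P3 a b x y h1.symm h2.symm h3.symm h5 h6 h8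
    have t2 := P3 a b x z h1.symm h2.symm h4.symm h5 h7 h9
    have t3 := P3 a b y z h1.symm h3.symm h4.symm h6 h7 h10
    have t4 := P3 b a x y h1 h5.symm h6.symm h2 h3 h8
    have t5 := P3 b a x z h1 h5.symm h7.symm h2 h4 h9
    have t6 := P3 b a y z h1 h6.symm h7.symm h3 h4 h10
    have ux := P2 x a b h2 h5 h1
    have uy := P2 y a b h3 h6 h1
    have uz := P2 z a b h4 h7 h1
    rw [hs x a, hs x b] at ux
    rw [hs y a, hs y b] at uy
    rw [hs z a, hs z b] at uz
    rw [hs b a] at t4 t5 t6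
    exact k5_lemma _ _ _ _ _ _ _ _ t1 t2 t3 t4 t5 t6 ux uy uz
  have hqc : q = 2 ∨ q = 3 ∨ q = 4 ∨ q = 5 := by omega
  rcases hqc with rfl | rfl | rfl | rfl
  · simp [Fin.sum_univ_succ] at htot
    have := P1 0 1 (by decide)
    have := P1 1 0 (by decide)
    omega
  · simp [Fin.sum_univ_succ] at htot
    have a0 := P1 1 0 (by decide)
    have a1 := P1 0 1 (by decide)
    have a2 := P1 0 2 (by decide)
    have b0 := P2 0 1 2 (by decide) (by decide) (by decide)
    have b1 := P2 1 0 2 (by decide) (by decide) (by decide)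
    have b2 := P2 2 0 1 (by decide) (by decide) (by decide)
    rw [hs 1 0] at b1
    rw [hs 2 0, hs 2 1] at b2
    have : e 0 1 = e 0 2 ∨ e 0 1 = e 1 2 ∨ e 0 2 = e 1 2 := by
      cases e 0 1 <;> cases e 0 2 <;> cases e 1 2 <;> simp
    rcases this with h | h | h
    · have := b0 h; omega
    · have := b1 h; omega
    · have := b2 h; omega
  · simp [Fin.sum_univ_succ] at htot
    have x0 := P3 0 1 2 3 (by decide) (by decide) (by decide) (by decide) (by decide) (by decide)
    have x1 := P3 1 0 2 3 (by decide) (by decide) (by decide) (by decide) (by decide) (by decide)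
    have x2 := P3 2 0 1 3 (by decide) (by decide) (by decide) (by decide) (by decide) (by decide)
    have x3 := P3 3 0 1 2 (by decide) (by decide) (by decide) (by decide) (by decide) (by decide)
    have b01 := P2 2 0 1 (by decide) (by decide) (by decide)
    have c01 := P2 3 0 1 (by decide) (by decide) (by decide)
    have b23 := P2 0 2 3 (by decide) (by decide) (by decide)
    have c23 := P2 1 2 3 (by decide) (by decide) (by decide)
    have b02 := P2 1 0 2 (by decide) (by decide) (by decide)
    have c02 := P2 3 0 2 (by decide) (by decide) (by decide)
    have b13 := P2 0 1 3 (by decide) (by decide) (by decide)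
    have c13 := P2 2 1 3 (by decide) (by decide) (by decide)
    have b03 := P2 1 0 3 (by decide) (by decide) (by decide)
    have c03 := P2 2 0 3 (by decide) (by decide) (by decide)
    have b12 := P2 0 1 2 (by decide) (by decide) (by decide)
    have c12 := P2 3 1 2 (by decide) (by decide) (by decide)
    simp only [hs 1 0, hs 2 0, hs 3 0, hs 2 1, hs 3 1, hs 3 2] at x0 x1 x2 x3 b01 c01 b23 c23 b02 c02 b13 c13 b03 c03 b12 c12
    have f1 : ¬ (w 0 + w 1 ≤ 2 * m - 1 ∧ w 2 + w 3 ≤ 2 * m - 1) := by omega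
    have f2 : ¬ (w 0 + w 2 ≤ 2 * m - 1 ∧ w 1 + w 3 ≤ 2 * m - 1) := by omega
    have f3 : ¬ (w 0 + w 3 ≤ 2 * m - 1 ∧ w 1 + w 2 ≤ 2 * m - 1) := by omega
    exact k4_lemma _ _ _ _ _ _ _ _ _ _ _ _ x0 x1 x2 x3 b01 c01 b23 c23 b02 c02 b13 c13 b03 c03
      b12 c12 f1 f2 f3
  · simp [Fin.sum_univ_succ] at htot
    have p01 := P4 0 1 2 3 4 (by decide) (by decide) (by decide) (by decide) (by decide)
      (by decide) (by decide) (by decide) (by decide) (by decide)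
    have p02 := P4 0 2 1 3 4 (by decide) (by decide) (by decide) (by decide) (by decide)
      (by decide) (by decide) (by decide) (by decide) (by decide)
    have p03 := P4 0 3 1 2 4 (by decide) (by decide) (by decide) (by decide) (by decide)
      (by decide) (by decide) (by decide) (by decide) (by decide)
    have p04 := P4 0 4 1 2 3 (by decide) (by decide) (by decide) (by decide) (by decide)
      (by decide) (by decide) (by decide) (by decide) (by decide)
    have p12 := P4 1 2 0 3 4 (by decide) (by decide) (by decide) (by decide) (by decide)
      (by decide) (by decide) (by decide) (by decide) (by decide)
    have p13 := P4 1 3 0 2 4 (by decide) (by decide) (by decide) (by decide) (by decide)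
      (by decide) (by decide) (by decide) (by decide) (by decide)
    have p14 := P4 1 4 0 2 3 (by decide) (by decide) (by decide) (by decide) (by decide)
      (by decide) (by decide) (by decide) (by decide) (by decide)
    have p23 := P4 2 3 0 1 4 (by decide) (by decide) (by decide) (by decide) (by decide)
      (by decide) (by decide) (by decide) (by decide) (by decide)
    have p24 := P4 2 4 0 1 3 (by decide) (by decide) (by decide) (by decide) (by decide)
      (by decide) (by decide) (by decide) (by decide) (by decide)
    have p34 := P4 3 4 0 1 2 (by decide) (by decide) (by decide) (by decide) (by decide)
      (by decide) (by decide) (by decide) (by decide) (by decide)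
    have w0 := hw 0
    have w1 := hw 1
    have w2 := hw 2
    have w3 := hw 3
    have w4 := hw 4
    have e0 : (Fin.succ (2 : Fin 4)) = 3 := rfl
    have e1 : (Fin.succ (Fin.succ (1 : Fin 3))) = 3 := rfl
    have e2 : (Fin.succ (3 : Fin 4)) = 4 := rfl
    clear hsub P1 P2 P3 P4 hd hs hw
    omega

open Classical in
theorem star_of_card {N k n : ℕ} {G : SimpleGraph (Fin N)} {c : Fin N → Fin N → Fin k}
    (hs : ∀ x y, c x y = c y x) (x : Fin N) (i : Fin k)
    (h : n ≤ (Finset.univ.filter fun y => G.Adj x y ∧ c x y = i).card) :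
    IsMonoCopy G c (starG n) := by
  obtain ⟨s, hs1, hs2⟩ := Finset.exists_subset_card_eq h
  let g : Fin n ≃ s := (s.equivFinOfCardEq hs2).symm
  have hg : ∀ j, G.Adj x (g j) ∧ c x (g j) = i := fun j => by
    have := hs1 (g j).2
    simpa using this
  refine ⟨Fin.cons x (fun j => (g j : Fin N)), i, ?_, ?_⟩
  · rw [Fin.cons_injective_iff]
    refine ⟨?_, fun a b hab => g.injective (Subtype.ext hab)⟩
    rintro ⟨j, hj⟩
    have := (hg j).1
    simp only at hj
    rw [hj] at this
    exact G.loopless.irrefl _ this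
  · intro a b hab
    simp only [starG, SimpleGraph.fromRel_adj] at hab
    obtain ⟨hne, rfl | rfl⟩ := hab
    · obtain ⟨j, rfl⟩ := Fin.exists_succ_eq.2 hne.symm
      simpa using hg j
    · obtain ⟨j, rfl⟩ := Fin.exists_succ_eq.2 hne
      have := hg j
      simp only [Fin.cons_zero, Fin.cons_succ]
      exact ⟨this.1.symm, by rw [hs]; exact this.2⟩

/-- A monochromatic star cannot exist when each color neighbourhood injects in a small set. -/
theorem no_star {N k n : ℕ} {G : SimpleGraph (Fin N)} {c : Fin N → Fin N → Fin k}
    (h : ∀ (x : Fin N) (i : Fin k), ∃ (T : Finset ℕ) (g : Fin N → ℕ), T.card < n ∧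
      (∀ y, G.Adj x y → c x y = i → g y ∈ T) ∧
      (∀ y z, G.Adj x y → c x y = i → G.Adj x z → c x z = i → g y = g z → y = z)) :
    ¬ IsMonoCopy G c (starG n) := by
  rintro ⟨f, i, hf, hadj⟩
  obtain ⟨T, g, hT, h1, h2⟩ := h (f 0) i
  have ha : ∀ j : Fin n, G.Adj (f 0) (f j.succ) ∧ c (f 0) (f j.succ) = i := by
    intro j
    apply hadj
    simp [starG, SimpleGraph.fromRel_adj, (Fin.succ_ne_zero j).symm]
  have : (Finset.univ : Finset (Fin n)).card ≤ T.card := by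
    apply Finset.card_le_card_of_injOn (fun j => g (f j.succ))
    · intro j _
      exact h1 _ (ha j).1 (ha j).2
    · intro j _ l _ hjl
      have := h2 _ _ (ha j).1 (ha j).2 (ha l).1 (ha l).2 hjl
      exact Fin.succ_injective _ (hf this)
  simp at this
  omega

open Classical in
theorem main_part {k m : ℕ} (hm : 6 ≤ m) (c : Fin (5 * m - 3) → Fin (5 * m - 3) → Fin k)
    (hs : ∀ x y, c x y = c y x)
    (hr : NoRainbowTriangle (compMinusEdge (5 * m - 3)) c) :
    IsMonoCopy (compMinusEdge (5 * m - 3)) c (starG (2 * m)) := by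
  by_contra hno
  have hdeg : ∀ x i, (Finset.univ.filter fun y =>
      (compMinusEdge (5 * m - 3)).Adj x y ∧ c x y = i).card ≤ 2 * m - 1 := by
    intro x i
    by_contra h
    exact hno (star_of_card hs x i (by omega))
  have hN : 0 < 5 * m - 3 := by omega
  let v : Fin (5 * m - 3) := ⟨0, hN⟩
  -- Gallai partition
  have hdisc : Disc (compMinusEdge (5 * m - 3)) c hs Finset.univ := by
    have h1 : (Finset.univ : Finset (Fin (5 * m - 3))) = insert v (Finset.univ.erase v) := by
      simp
    have hcl : ∀ x ∈ Finset.univ.erase v, ∀ y ∈ Finset.univ.erase v, y ≠ x →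
        (compMinusEdge (5 * m - 3)).Adj x y := by
      intro x hx y hy hne
      simp only [Finset.mem_erase, Finset.mem_univ, and_true, ne_eq, v, Fin.ext_iff] at hx hy
      exact ⟨hne.symm, fun h => hx h.1, fun h => hy h.2⟩
    rw [h1]
    apply insert_disc hs hr (Finset.notMem_erase _ _) hcl
    apply clique_disc hs hr _ hcl
    rw [Finset.card_erase_of_mem (Finset.mem_univ _), Finset.card_univ, Fintype.card_fin]
    omega
  obtain ⟨r, b, x0, -, y0, -, hxy⟩ := hdisc
  set G := compMinusEdge (5 * m - 3) with hG
  set H := otherGraph G c hs Finset.univ r b with hH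
  let w : H.ConnectedComponent → ℕ := fun C =>
    (Finset.univ.filter fun x => H.connectedComponentMk x = C).card
  have hout : ∀ x y, G.Adj x y → H.connectedComponentMk x ≠ H.connectedComponentMk y →
      c x y = r ∨ c x y = b := by
    intro x y h hne
    by_contra hc
    push Not at hc
    apply hne
    rw [SimpleGraph.ConnectedComponent.eq]
    exact SimpleGraph.Adj.reachable ⟨h, Finset.mem_univ _, Finset.mem_univ _, hc.1, hc.2⟩
  -- every vertex has few non-neighbours
  have hcount : ∀ x, (Finset.univ.filter fun y => ¬ G.Adj x y ∨
      H.connectedComponentMk y = H.connectedComponentMk x).card + (4 * m - 2) ≥ 5 * m - 3 := by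
    intro x
    have hcov : (Finset.univ : Finset (Fin (5 * m - 3))) ⊆ (Finset.univ.filter fun y => ¬ G.Adj x y ∨
      H.connectedComponentMk y = H.connectedComponentMk x) ∪
      ((Finset.univ.filter fun y => G.Adj x y ∧ c x y = r) ∪
        (Finset.univ.filter fun y => G.Adj x y ∧ c x y = b)) := by
      intro y _
      simp only [Finset.mem_union, Finset.mem_filter, Finset.mem_univ, true_and]
      by_cases h1 : G.Adj x y
      · by_cases h2 : H.connectedComponentMk y = H.connectedComponentMk x
        · exact Or.inl (Or.inr h2)
        · rcases hout x y h1 (fun h => h2 h.symm) with h | h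
          · exact Or.inr (Or.inl ⟨h1, h⟩)
          · exact Or.inr (Or.inr ⟨h1, h⟩)
      · exact Or.inl (Or.inl h1)
    have h1 := Finset.card_le_card hcov
    rw [Finset.card_univ, Fintype.card_fin] at h1
    have h2 := Finset.card_union_le (Finset.univ.filter fun y => ¬ G.Adj x y ∨
      H.connectedComponentMk y = H.connectedComponentMk x)
      ((Finset.univ.filter fun y => G.Adj x y ∧ c x y = r) ∪
        (Finset.univ.filter fun y => G.Adj x y ∧ c x y = b))
    have h3 := Finset.card_union_le (Finset.univ.filter fun y => G.Adj x y ∧ c x y = r)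
        (Finset.univ.filter fun y => G.Adj x y ∧ c x y = b)
    have h4 := hdeg x r
    have h5 := hdeg x b
    omega
  have hfull : ∀ x : Fin (5 * m - 3), 2 ≤ x.val → ∀ t, t ≠ x → G.Adj x t := by
    intro x hx t ht
    exact ⟨ht.symm, fun h => by omega, fun h => by omega⟩
  -- representatives away from the missing edge
  have hrep : ∀ C : H.ConnectedComponent, ∃ x : Fin (5 * m - 3), 2 ≤ x.val ∧
      H.connectedComponentMk x = C := by
    intro C
    by_contra hc
    push Not at hc
    obtain ⟨x, rfl⟩ := C.exists_rep
    have h1 := hcount x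
    have h2 : (Finset.univ.filter fun y => ¬ G.Adj x y ∨
      H.connectedComponentMk y = H.connectedComponentMk x) ⊆
        ({⟨0, by omega⟩, ⟨1, by omega⟩} : Finset (Fin (5 * m - 3))) := by
      intro y hy
      simp only [Finset.mem_filter, Finset.mem_univ, true_and] at hy
      have hlt : ∀ z : Fin (5 * m - 3), H.connectedComponentMk z = H.connectedComponentMk x →
          z.val < 2 := by
        intro z hz
        by_contra h
        exact hc z (by omega) hz
      have hy2 : y.val < 2 := by
        rcases hy with hy | hy
        · by_contra h
          by_cases hxy : x = y
          · subst hxy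
            exact h (hlt _ rfl)
          · exact hy (hfull y (by omega) x hxy).symm
        · exact hlt y hy
      simp only [Finset.mem_insert, Finset.mem_singleton, Fin.ext_iff]
      omega
    have h3 := Finset.card_le_card h2
    have h4 := Finset.card_le_two (a := (⟨0, by omega⟩ : Fin (5 * m - 3)))
      (b := ⟨1, by omega⟩)
    omega
  choose ρ hρ2 hρ using hrep
  have hw : ∀ C, m - 1 ≤ w C := by
    intro C
    have h1 := hcount (ρ C)
    have h2 : (Finset.univ.filter fun y => ¬ G.Adj (ρ C) y ∨
      H.connectedComponentMk y = H.connectedComponentMk (ρ C)) ⊆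
      Finset.univ.filter fun x => H.connectedComponentMk x = C := by
      intro y hy
      simp only [Finset.mem_filter, Finset.mem_univ, true_and] at hy ⊢
      rcases hy with hy | hy
      · by_cases h : y = ρ C
        · rw [h, hρ]
        · exact absurd (hfull _ (hρ2 C) y h) hy
      · rw [hy, hρ]
    have h3 := Finset.card_le_card h2
    change m - 1 ≤ (Finset.univ.filter fun x => H.connectedComponentMk x = C).card
    omega
  have hmod : ∀ C D, D ≠ C → ∀ y, H.connectedComponentMk y = D → c (ρ C) y = c (ρ C) (ρ D) := by
    intro C D hCD y hy
    refine module_lemma hs hr (Finset.mem_univ _) (fun t _ ht => hfull _ (hρ2 C) t ht)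
      (W := Finset.univ) (r := r) (b := b) ?_ ?_
    · have : H.connectedComponentMk y = H.connectedComponentMk (ρ D) := by rw [hy, hρ]
      exact SimpleGraph.ConnectedComponent.eq.1 this
    · intro h
      have := SimpleGraph.ConnectedComponent.eq.2 h
      change H.connectedComponentMk _ = H.connectedComponentMk _ at this
      rw [hρ, hy] at this
      exact hCD this.symm
  have htotal : ∑ C, w C = 5 * m - 3 := by
    have := Finset.card_eq_sum_card_fiberwise (s := (Finset.univ : Finset (Fin (5 * m - 3))))
      (t := (Finset.univ : Finset H.ConnectedComponent)) (f := H.connectedComponentMk)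
      (by intro x _; simp)
    rw [Finset.card_univ, Fintype.card_fin] at this
    exact this.symm
  have hdw : ∀ (C : H.ConnectedComponent) (i : Fin k),
      ∑ D with D ≠ C ∧ c (ρ C) (ρ D) = i, w D ≤ 2 * m - 1 := by
    intro C i
    refine le_trans ?_ (hdeg (ρ C) i)
    have := Finset.card_eq_sum_card_fiberwise
      (s := Finset.univ.filter fun y => H.connectedComponentMk y ∈
        (Finset.univ.filter fun D => D ≠ C ∧ c (ρ C) (ρ D) = i))
      (t := Finset.univ.filter fun D => D ≠ C ∧ c (ρ C) (ρ D) = i)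
      (f := H.connectedComponentMk) (by intro x hx; simpa using hx)
    have h2 : ∑ D with D ≠ C ∧ c (ρ C) (ρ D) = i, w D =
      (Finset.univ.filter fun y => H.connectedComponentMk y ∈
        (Finset.univ.filter fun D => D ≠ C ∧ c (ρ C) (ρ D) = i)).card := by
      rw [this]
      apply Finset.sum_congr rfl
      intro D hD
      simp only [w]
      congr 1
      ext y
      simp only [Finset.mem_filter, Finset.mem_univ, true_and] at hD ⊢
      constructor
      · rintro rfl; exact ⟨hD, rfl⟩
      · exact fun h => h.2
    rw [h2]
    apply Finset.card_le_card
    intro y hy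
    simp only [Finset.mem_filter, Finset.mem_univ, true_and] at hy ⊢
    refine ⟨hfull _ (hρ2 C) y ?_, ?_⟩
    · rintro rfl; exact hy.1 (hρ C)
    · rw [hmod C _ hy.1 y rfl]; exact hy.2
  -- transport to `Fin q`
  let E := Fintype.equivFin H.ConnectedComponent
  refine weights hm (q := Fintype.card H.ConnectedComponent) (fun i => w (E.symm i))
    (fun i j => decide (c (ρ (E.symm i)) (ρ (E.symm j)) = r)) ?_ (fun i => hw _) ?_ ?_ ?_
  · intro i j
    simp only [hs (ρ (E.symm i))]
  · apply Fintype.one_lt_card_iff.2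
    exact ⟨H.connectedComponentMk x0, H.connectedComponentMk y0, fun h =>
      hxy (SimpleGraph.ConnectedComponent.eq.1 h)⟩
  · exact (Equiv.sum_comp E.symm w).trans htotal
  · intro i a
    have key : ∀ p : Fin k, (∀ D, D ≠ E.symm i → decide (c (ρ (E.symm i)) (ρ D) = r) = a →
        c (ρ (E.symm i)) (ρ D) = p) →
        ∑ j with j ≠ i ∧ decide (c (ρ (E.symm i)) (ρ (E.symm j)) = r) = a, w (E.symm j) ≤
          2 * m - 1 := by
      intro p hp
      refine le_trans ?_ (hdw (E.symm i) p)
      refine le_trans (le_of_eq (Finset.sum_map _ E.symm.toEmbedding w).symm) ?_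
      apply Finset.sum_le_sum_of_subset
      intro D hD
      simp only [Finset.mem_map, Finset.mem_filter, Finset.mem_univ, true_and,
        Equiv.coe_toEmbedding] at hD ⊢
      obtain ⟨j, ⟨h1, h2⟩, rfl⟩ := hD
      have h3 : E.symm j ≠ E.symm i := fun h => h1 (E.symm.injective h)
      exact ⟨h3, hp _ h3 h2⟩
    cases a with
    | true => exact key r (fun D _ h => by simpa using h)
    | false =>
      refine key b (fun D hD h => ?_)
      have h1 : c (ρ (E.symm i)) (ρ D) ≠ r := by simpa using h
      have h2 : ρ D ≠ ρ (E.symm i) := by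
        intro h'
        have := hρ D
        rw [h', hρ] at this
        exact hD this.symm
      rcases hout _ _ (hfull _ (hρ2 (E.symm i)) _ h2) (by rw [hρ, hρ]; exact hD.symm) with h | h
      · exact absurd h h1
      · exact h

/-- Lower bound coloring: blown-up pentagon. -/
theorem gallai_lower {k m N : ℕ} (hm : 6 ≤ m) (hk : 3 ≤ k) (hN : N ≤ 5 * m - 4) :
    ∃ c : Fin N → Fin N → Fin k, (∀ x y, c x y = c y x) ∧
      NoRainbowTriangle (⊤ : SimpleGraph (Fin N)) c ∧
      ¬ IsMonoCopy (⊤ : SimpleGraph (Fin N)) c (starG (2 * m)) := by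
  let P : ℕ → ℕ → ℕ := fun a b => if a = b then 2 else
    if (a + 1) % 5 = b ∨ (b + 1) % 5 = a then 0 else 1
  have hP : ∀ a b, P a b < 3 := by
    intro a b
    simp only [P]
    split_ifs <;> omega
  refine ⟨fun x y => ⟨P (x.val % 5) (y.val % 5), lt_of_lt_of_le (hP _ _) hk⟩, ?_, ?_, ?_⟩
  · intro x y
    simp only [Fin.mk.injEq, P]
    split_ifs <;> omega
  · rintro ⟨x, y, z, -, -, -, h1, h2, h3⟩
    simp only [Fin.mk.injEq, P, ne_eq] at h1 h2 h3
    split_ifs at h1 h2 h3 <;> omega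
  · apply no_star
    intro x i
    -- at most two residue classes `a ≠ b`
    have hab : ∃ a b, a < b ∧ b < 5 ∧ ∀ y : ℕ, P (x.val % 5) (y % 5) = i.val →
        y % 5 = a ∨ y % 5 = b := by
      have hx := Nat.mod_lt x.val (show 5 > 0 by norm_num)
      generalize x.val % 5 = t at *
      generalize i.val = j at *
      have : ∃ a b, a < b ∧ b < 5 ∧ ∀ s < 5, P t s = j → s = a ∨ s = b := by
        by_cases hj : j < 3
        · interval_cases j <;> interval_cases t
          · exact ⟨1, 4, by decide⟩
          · exact ⟨0, 2, by decide⟩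
          · exact ⟨1, 3, by decide⟩
          · exact ⟨2, 4, by decide⟩
          · exact ⟨0, 3, by decide⟩
          · exact ⟨2, 3, by decide⟩
          · exact ⟨3, 4, by decide⟩
          · exact ⟨0, 4, by decide⟩
          · exact ⟨0, 1, by decide⟩
          · exact ⟨1, 2, by decide⟩
          · exact ⟨0, 1, by decide⟩
          · exact ⟨0, 1, by decide⟩
          · exact ⟨0, 2, by decide⟩
          · exact ⟨0, 3, by decide⟩
          · exact ⟨0, 4, by decide⟩
        · refine ⟨0, 1, by norm_num, by norm_num, fun s _ h => ?_⟩
          have := hP t s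
          omega
      obtain ⟨a, b, h1, h2, h3⟩ := this
      exact ⟨a, b, h1, h2, fun y hy => h3 _ (Nat.mod_lt _ (by norm_num)) hy⟩
    obtain ⟨a, b, h1, h2, h3⟩ := hab
    refine ⟨Finset.range (2 * m - 1),
      fun y => if y.val % 5 = b then y.val / 5 else (m - 1) + y.val / 5, ?_, ?_, ?_⟩
    · simp; omega
    · intro y _ hy
      have hy' := h3 y.val (by simpa [Fin.ext_iff] using hy)
      have := y.2
      simp only [Finset.mem_range]
      split_ifs <;> omega
    · intro y z _ hy _ hz hyz
      have hy' := h3 y.val (by simpa [Fin.ext_iff] using hy)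
      have hz' := h3 z.val (by simpa [Fin.ext_iff] using hz)
      have := y.2
      have := z.2
      simp only at hyz
      apply Fin.ext
      split_ifs at hyz <;> omega

open Classical in
theorem ramsey2_upper {m : ℕ} (hm : 6 ≤ m) (c : Fin (4 * m - 1) → Fin (4 * m - 1) → Fin 2)
    (hs : ∀ x y, c x y = c y x) :
    IsMonoCopy (⊤ : SimpleGraph (Fin (4 * m - 1))) c (starG (2 * m)) := by
  by_contra hno
  have hdeg : ∀ x i, (Finset.univ.filter fun y =>
      (⊤ : SimpleGraph (Fin (4 * m - 1))).Adj x y ∧ c x y = i).card ≤ 2 * m - 1 := by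
    intro x i
    by_contra h
    have h1 := Nat.succ_le_of_lt (Nat.lt_of_not_le h)
    have h2 : 2 * m = (2 * m - 1).succ := by omega
    refine hno (star_of_card hs x i (Nat.le_trans (Nat.le_of_eq h2) (Nat.le_trans h1
      (Nat.le_of_eq ?_))))
    congr 1
    ext y
    simp
  let R : SimpleGraph (Fin (4 * m - 1)) :=
    { Adj := fun x y => x ≠ y ∧ c x y = 0
      symm := ⟨fun x y h => ⟨h.1.symm, by rw [hs]; exact h.2⟩⟩
      loopless := ⟨fun x h => h.1 rfl⟩ }
  have hR : ∀ x, R.degree x = 2 * m - 1 := by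
    intro x
    have e0 : R.degree x = (Finset.univ.filter fun y =>
      (⊤ : SimpleGraph (Fin (4 * m - 1))).Adj x y ∧ c x y = 0).card := by
      rw [← SimpleGraph.card_neighborFinset_eq_degree]
      congr 1
      ext y
      simp [R]
    have h0 := hdeg x 0
    have h1 := hdeg x 1
    have hcov : (Finset.univ : Finset (Fin (4 * m - 1))) ⊆ {x} ∪
      ((Finset.univ.filter fun y =>
        (⊤ : SimpleGraph (Fin (4 * m - 1))).Adj x y ∧ c x y = 0) ∪
      (Finset.univ.filter fun y =>
        (⊤ : SimpleGraph (Fin (4 * m - 1))).Adj x y ∧ c x y = 1)) := by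
      intro y _
      simp only [Finset.mem_union, Finset.mem_filter, Finset.mem_univ, true_and,
        Finset.mem_singleton, SimpleGraph.top_adj]
      have : c x y = 0 ∨ c x y = 1 := by omega
      grind
    have h2 := Finset.card_le_card hcov
    have h3 := le_trans h2 (Finset.card_union_le _ _)
    have h4 := le_trans h3 (Nat.add_le_add_left (Finset.card_union_le _ _) _)
    rw [Finset.card_univ, Fintype.card_fin, Finset.card_singleton] at h4
    omega
  have hsum := R.sum_degrees_eq_twice_card_edges
  simp only [hR, Finset.sum_const, Finset.card_univ, Fintype.card_fin, smul_eq_mul] at hsum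
  have ho : Odd ((4 * m - 1) * (2 * m - 1)) := by
    apply Odd.mul
    · exact ⟨2 * m - 1, by omega⟩
    · exact ⟨m - 1, by omega⟩
  rw [hsum] at ho
  exact (Nat.not_odd_iff_even.2 (even_two_mul _)) ho

theorem ramsey2_full {m N : ℕ} (hm : 6 ≤ m) (hN : N ≤ 4 * m - 1) :
    ∃ c : Fin N → Fin N → Fin 2, (∀ x y, c x y = c y x) ∧
      ¬ IsMonoCopy (compMinusEdge N) c (starG (2 * m)) := by
  -- red relation on `a < b`
  let Q : ℕ → ℕ → Prop := fun a b => (2 ≤ b - a ∧ b - a ≤ m) ∨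
    (3 * m - 1 ≤ b - a ∧ b - a ≤ 4 * m - 3) ∨ (b = a + 1 ∧ a % 2 = 1)
  classical
  refine ⟨fun x y => if Q (min x.val y.val) (max x.val y.val) then 0 else 1, ?_, ?_⟩
  · intro x y
    simp only [min_comm, max_comm]
  · apply no_star
    intro x i
    have hx := x.2
    have hi : i = 0 ∨ i = 1 := by omega
    have hinj : ∀ y z : Fin N,
        (if x.val ≤ y.val then y.val - x.val else y.val + (4 * m - 1) - x.val) =
        (if x.val ≤ z.val then z.val - x.val else z.val + (4 * m - 1) - x.val) → y = z := by
      intro y z h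
      have := y.2
      have := z.2
      apply Fin.ext
      split_ifs at h <;> omega
    rcases hi with rfl | rfl
    · refine ⟨insert (if x.val % 2 = 1 then 1 else 4 * m - 2)
        (Finset.Icc 2 m ∪ Finset.Icc (3 * m - 1) (4 * m - 3)),
        fun y => if x.val ≤ y.val then y.val - x.val else y.val + (4 * m - 1) - x.val,
        ?_, ?_, fun y z _ _ _ _ h => hinj y z h⟩
      · refine lt_of_le_of_lt (Finset.card_insert_le _ _) ?_
        have := Finset.card_union_le (Finset.Icc 2 m) (Finset.Icc (3 * m - 1) (4 * m - 3))
        simp only [Nat.card_Icc] at this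
        omega
      · intro y hadj hc
        have hy := y.2
        obtain ⟨ne, -, -⟩ := hadj
        have ne' : x.val ≠ y.val := fun h => ne (Fin.ext h)
        have hQ : Q (min x.val y.val) (max x.val y.val) := by
          by_contra h
          simp [h] at hc
        simp only [Q] at hQ
        simp only [Finset.mem_insert, Finset.mem_union, Finset.mem_Icc]
        rcases le_total x.val y.val with h | h
        · rw [min_eq_left h, max_eq_right h] at hQ
          rw [if_pos h]
          split_ifs <;> omega
        · rw [min_eq_right h, max_eq_left h] at hQ
          rw [if_neg (by omega)]
          split_ifs <;> omega
    · refine ⟨insert (if x.val % 2 = 1 ∨ x.val = 0 then 4 * m - 2 else 1)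
        (Finset.Icc (m + 1) (3 * m - 2)),
        fun y => if x.val ≤ y.val then y.val - x.val else y.val + (4 * m - 1) - x.val,
        ?_, ?_, fun y z _ _ _ _ h => hinj y z h⟩
      · refine lt_of_le_of_lt (Finset.card_insert_le _ _) ?_
        simp only [Nat.card_Icc]
        omega
      · intro y hadj hc
        have hy := y.2
        obtain ⟨ne, hn1, hn2⟩ := hadj
        have ne' : x.val ≠ y.val := fun h => ne (Fin.ext h)
        have hQ : ¬ Q (min x.val y.val) (max x.val y.val) := by
          intro h
          simp [h] at hc
        simp only [Q] at hQ
        simp only [Finset.mem_insert, Finset.mem_Icc]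
        rcases le_total x.val y.val with h | h
        · rw [min_eq_left h, max_eq_right h] at hQ
          rw [if_pos h]
          split_ifs <;> omega
        · rw [min_eq_right h, max_eq_left h] at hQ
          rw [if_neg (by omega)]
          split_ifs <;> omega

end helpers

/-- For every `k ≥ 3` and even `n ≥ 12`, every rainbow-triangle-free
`k`-coloring of the complete graph on `5n/2 − 3` vertices minus one edge
contains a monochromatic copy of the star `K_{1,n}`. Since
`GR_k(K_{1,n}) = 5n/2 − 3`, the star `K_{1,n}` is not Gallai-Ramsey-full,
although it is Ramsey-full. -/
theorem star_not_gallai_ramsey_full (k n : ℕ) (hk : 3 ≤ k) (hn : 12 ≤ n)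
    (hne : n % 2 = 0) :
    (∀ c : Fin (5 * n / 2 - 3) → Fin (5 * n / 2 - 3) → Fin k,
      (∀ x y, c x y = c y x) →
      NoRainbowTriangle (compMinusEdge (5 * n / 2 - 3)) c →
      IsMonoCopy (compMinusEdge (5 * n / 2 - 3)) c (starG n)) ∧
    GallaiRamsey k (starG n) = 5 * n / 2 - 3 ∧
    ¬ GallaiRamseyFull k (starG n) ∧
    (∃ c : Fin (Ramsey2 (starG n)) → Fin (Ramsey2 (starG n)) → Fin 2,
      (∀ x y, c x y = c y x) ∧
      ¬ IsMonoCopy (compMinusEdge (Ramsey2 (starG n))) c (starG n)) := by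
  obtain ⟨m, rfl⟩ : ∃ m, n = 2 * m := ⟨n / 2, by omega⟩
  have hm : 6 ≤ m := by omega
  have e : 5 * (2 * m) / 2 - 3 = 5 * m - 3 := by omega
  rw [e]
  have A := fun c hs hr => main_part (k := k) hm c hs hr
  have B : GallaiRamsey k (starG (2 * m)) = 5 * m - 3 := by
    apply le_antisymm
    · apply Nat.sInf_le
      intro c hs hr
      obtain ⟨f, i, hf, h⟩ := A c hs (by
        rintro ⟨x, y, z, h1, h2, h3, h4⟩
        exact hr ⟨x, y, z, h1.1, h2.1, h3.1, h4⟩)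
      exact ⟨f, i, hf, fun a b hab => ⟨(h a b hab).1.1, (h a b hab).2⟩⟩
    · apply le_csInf
      · refine ⟨5 * m - 3, ?_⟩
        intro c hs hr
        obtain ⟨f, i, hf, h⟩ := A c hs (by
          rintro ⟨x, y, z, h1, h2, h3, h4⟩
          exact hr ⟨x, y, z, h1.1, h2.1, h3.1, h4⟩)
        exact ⟨f, i, hf, fun a b hab => ⟨(h a b hab).1.1, (h a b hab).2⟩⟩
      · intro N hN
        by_contra hlt
        obtain ⟨c, h1, h2, h3⟩ := gallai_lower (N := N) hm hk (by omega)
        exact h3 (hN c h1 h2)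
  refine ⟨A, B, ?_, ?_⟩
  · unfold GallaiRamseyFull
    rw [B]
    rintro ⟨c, h1, h2, h3⟩
    exact h3 (A c h1 h2)
  · exact ramsey2_full hm (Nat.sInf_le (fun c hs => ramsey2_upper hm c hs))
end
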